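/- Let λ_B ≈ 2.35698 be the unique positive real root of the polynomial x⁸ − 2x⁷ − x⁵ − x⁴ − 2x³ − 2x² − x − 1. Then every real number γ ≥ λ_B is the growth rate of a permutation class: there is a permutation class C with lim_{n→∞} |C_n|^{1/n} = γ. -/

import Mathlib

noncomputable section

open Filter

/-- Pattern containment: `τ` is contained in `σ`. -/
def PermContains {k n : ℕ} (τ : Equiv.Perm (Fin k)) (σ : Equiv.Perm (Fin n)) : Prop :=
  ∃ f : Fin k → Fin n, StrictMono f ∧ ∀ a b : Fin k, τ a < τ b ↔ σ (f a) < σ (f b)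

/-- A permutation class: a set of permutations closed downward under containment. -/
def IsPermClass (C : ∀ n : ℕ, Set (Equiv.Perm (Fin n))) : Prop :=
  ∀ (n : ℕ) (σ : Equiv.Perm (Fin n)), σ ∈ C n →
    ∀ (k : ℕ) (τ : Equiv.Perm (Fin k)), PermContains τ σ → τ ∈ C k

/-!
Encode a permutation by its Lehmer code. Direct sums become concatenations, so the codes of a
sum-closed class are the concatenations of its indecomposable ones, and the class has growth rate
`1 / y` as soon as the weight `∑ y ^ |u|`, over the indecomposable codes `u`, is `1`.

To reach the weight `1` for every `y` in an interval, start from a set of indecomposable codes of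
weight at most `1` and consider blocks of further codes, each listed in such an order that any
initial segment may be added without destroying closure under containment. Blocks are filled
greedily: every code weighs at most as much as all later blocks together, so no gap is left and
the weight `1` is attained exactly. Four choices of the starting set give the rates from `2.353`,
which is less than `λ_B`, to `3.5`.

Appending increasing sequences in all possible ways to the permutations of a class raises its growth
rate by exactly `1`, which gives all larger rates.
-/

/-! ### Lehmer codes -/

/-- `IsLehmerFrom k l`: the list `l` is the part of a Lehmer code that follows its first `k`
entries, so that its `i`-th entry, counted from `0`, is at most `k + i`. -/
def IsLehmerFrom : ℕ → List ℕ → Prop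
  | _, [] => True
  | k, c :: l => c ≤ k ∧ IsLehmerFrom (k + 1) l

/-- Lehmer codes of permutations: the entry at a position is the number of larger values at earlier
positions. -/
abbrev IsLehmer (l : List ℕ) : Prop := IsLehmerFrom 0 l

/-- What becomes of the end `l` of a Lehmer code when a point preceding it is deleted, where `t` is
the number of values preceding `l` that are larger than the deleted one. -/
def afterDelete : ℕ → List ℕ → List ℕ
  | _, [] => []
  | t, c :: l => if t < c then (c - 1) :: afterDelete t l else c :: afterDelete (t + 1) l

/-- `Deletion u v`: the code `v` arises from the code `u` by deleting one point. -/
def Deletion (u v : List ℕ) : Prop := ∃ a c b, u = a ++ c :: b ∧ v = a ++ afterDelete c b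

lemma isLehmerFrom_iff_getElem (l : List ℕ) :
    ∀ k, IsLehmerFrom k l ↔ ∀ i (h : i < l.length), l[i] ≤ k + i := by
  induction l with
  | nil => simp [IsLehmerFrom]
  | cons c l ih =>
    intro k
    simp only [IsLehmerFrom, ih, List.length_cons]
    refine ⟨fun ⟨hc, hl⟩ i hi => ?_, fun h => ⟨by simpa using h 0 (by omega), fun i hi => ?_⟩⟩
    · rcases i with _ | i
      · simpa using hc
      · simpa only [List.getElem_cons_succ, add_assoc, add_comm 1] using hl i (by omega)
    · have := h (i + 1) (by omega)
      rw [List.getElem_cons_succ] at this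
      omega

lemma IsLehmerFrom.mono {l : List ℕ} :
    ∀ {j k : ℕ}, j ≤ k → IsLehmerFrom j l → IsLehmerFrom k l := by
  induction l with
  | nil => intros; trivial
  | cons c l ih => exact fun h hl => ⟨hl.1.trans h, ih (by omega) hl.2⟩

lemma isLehmerFrom_append (a b : List ℕ) :
    ∀ k, IsLehmerFrom k (a ++ b) ↔ IsLehmerFrom k a ∧ IsLehmerFrom (k + a.length) b := by
  induction a with
  | nil => simp [IsLehmerFrom]
  | cons c a ih =>
    intro k
    simp only [List.cons_append, IsLehmerFrom, ih, List.length_cons, and_assoc, add_assoc,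
      add_comm 1]

lemma IsLehmerFrom.append {a b : List ℕ} (ha : IsLehmer a) (hb : IsLehmer b) : IsLehmer (a ++ b) :=
  (isLehmerFrom_append a b 0).mpr ⟨ha, hb.mono (Nat.zero_le _)⟩

lemma IsLehmerFrom.of_append {a b : List ℕ} {k : ℕ} (h : IsLehmerFrom k (a ++ b)) :
    IsLehmerFrom k a :=
  ((isLehmerFrom_append a b k).mp h).1

lemma IsLehmerFrom.afterDelete_eq {l : List ℕ} :
    ∀ {k t : ℕ}, k ≤ t → IsLehmerFrom k l → afterDelete t l = l := by
  induction l with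
  | nil => intros; rfl
  | cons c l ih =>
    intro k t h hl
    rw [afterDelete, if_neg (by have := hl.1; omega), ih (by omega) hl.2]

lemma afterDelete_append (a : List ℕ) {b : List ℕ} (hb : IsLehmer b) :
    ∀ t, afterDelete t (a ++ b) = afterDelete t a ++ b := by
  induction a with
  | nil => exact fun t => hb.afterDelete_eq (Nat.zero_le t)
  | cons c a ih =>
    intro t
    simp only [List.cons_append, afterDelete]
    split_ifs <;> simp [ih]

lemma length_afterDelete (l : List ℕ) : ∀ t, (afterDelete t l).length = l.length := by
  induction l with
  | nil => exact fun _ => rfl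
  | cons c l ih => intro t; rw [afterDelete]; split_ifs <;> simp [ih]

lemma isLehmerFrom_afterDelete {l : List ℕ} :
    ∀ {k t : ℕ}, t ≤ k → IsLehmerFrom (k + 1) l → IsLehmerFrom k (afterDelete t l) := by
  induction l with
  | nil => intros; trivial
  | cons c l ih =>
    intro k t ht h
    obtain ⟨hc, hl⟩ := h
    rw [afterDelete]
    split_ifs
    · exact ⟨by omega, ih (by omega) hl⟩
    · exact ⟨by omega, ih (by omega) hl⟩

lemma Deletion.isLehmer {u v : List ℕ} (h : Deletion u v) (hu : IsLehmer u) : IsLehmer v := by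
  obtain ⟨a, c, b, rfl, rfl⟩ := h
  obtain ⟨ha, hc, hb⟩ := (isLehmerFrom_append a (c :: b) 0).mp hu
  exact (isLehmerFrom_append a _ 0).mpr ⟨ha, isLehmerFrom_afterDelete hc hb⟩

lemma Deletion.length_lt {u v : List ℕ} (h : Deletion u v) : v.length < u.length := by
  obtain ⟨a, c, b, rfl, rfl⟩ := h
  simp [length_afterDelete]

section LehmerCode

variable {α : Type*} [LinearOrder α]

/-- The Lehmer code of the word `l`, given that the letters of `p` precede it. -/
def lehmerFrom : List α → List α → List ℕ
  | _, [] => []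
  | p, x :: l => p.countP (x < ·) :: lehmerFrom (x :: p) l

lemma lehmerFrom_congr_perm (l : List α) :
    ∀ {p q : List α}, p.Perm q → lehmerFrom p l = lehmerFrom q l := by
  induction l with
  | nil => intros; rfl
  | cons x l ih =>
    intro p q h
    simp only [lehmerFrom]
    rw [h.countP_eq, ih (h.cons x)]

lemma lehmerFrom_append (l m : List α) :
    ∀ p, lehmerFrom p (l ++ m) = lehmerFrom p l ++ lehmerFrom (l.reverse ++ p) m := by
  induction l with
  | nil => intro p; rfl
  | cons x l ih => intro p; simp [lehmerFrom, ih]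

lemma length_lehmerFrom (l : List α) : ∀ p, (lehmerFrom p l).length = l.length := by
  induction l with
  | nil => intro p; rfl
  | cons x l ih => intro p; simp [lehmerFrom, ih]

lemma isLehmerFrom_lehmerFrom (l : List α) : ∀ p, IsLehmerFrom p.length (lehmerFrom p l) := by
  induction l with
  | nil => intro _; trivial
  | cons x l ih => exact fun p => ⟨List.countP_le_length, ih (x :: p)⟩

lemma countP_lt_antitone (p : List α) : Antitone fun x : α => p.countP (x < ·) := by
  intro x y h
  refine List.countP_mono_left fun z _ hz => ?_
  simp only [decide_eq_true_eq] at hz ⊢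
  exact h.trans_lt hz

lemma countP_lt_lt_of_lt {p : List α} {x y : α} (h : x < y) (hy : y ∈ p) :
    p.countP (y < ·) < p.countP (x < ·) := by
  obtain ⟨a, b, rfl⟩ := List.append_of_mem hy
  have ha : a.countP (y < ·) ≤ a.countP (x < ·) := countP_lt_antitone a h.le
  have hb : b.countP (y < ·) ≤ b.countP (x < ·) := countP_lt_antitone b h.le
  simp only [List.countP_append, List.countP_cons, h, lt_irrefl, decide_true, decide_false,
    if_true, Bool.false_eq_true, if_false]
  omega

lemma lehmerFrom_eq_afterDelete {x : α} (l : List α) : ∀ p : List α, x ∉ l →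
    lehmerFrom p l = afterDelete (p.countP (x < ·)) (lehmerFrom (x :: p) l) := by
  induction l with
  | nil => intro p _; rfl
  | cons y l ih =>
    intro p hx
    rw [List.mem_cons, not_or] at hx
    have ih' := ih (y :: p) hx.2
    have hswap : lehmerFrom (y :: x :: p) l = lehmerFrom (x :: y :: p) l :=
      lehmerFrom_congr_perm _ (.swap _ _ _)
    simp only [lehmerFrom, afterDelete, hswap, List.countP_cons] at ih' ⊢
    rcases lt_or_gt_of_ne hx.1 with h | h
    · have hle : p.countP (y < ·) ≤ p.countP (x < ·) := countP_lt_antitone p h.le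
      simp only [h, decide_true, if_true] at ih'
      simp only [not_lt.mpr h.le, decide_false, Bool.false_eq_true, if_false, add_zero]
      rw [if_neg (by omega), ih']
    · have hle : p.countP (x < ·) ≤ p.countP (y < ·) := countP_lt_antitone p h.le
      simp only [not_lt.mpr h.le, decide_false, Bool.false_eq_true, if_false, add_zero] at ih'
      simp only [h, decide_true, if_true]
      rw [if_pos (by omega), ih', Nat.add_sub_cancel]

lemma reflTransGen_deletion_of_sublist {l m : List α} (h : l.Sublist m) :
    ∀ p : List α, (p ++ m).Nodup →
      Relation.ReflTransGen Deletion (lehmerFrom [] (p ++ m)) (lehmerFrom [] (p ++ l)) := by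
  induction h with
  | slnil => intro p _; exact .refl
  | @cons l m x _ ih =>
    intro p hp
    have hx : x ∉ m := (List.nodup_cons.mp (List.nodup_append.mp hp).2.1).1
    refine .head ⟨lehmerFrom [] p, (p.reverse ++ []).countP (x < ·),
      lehmerFrom (x :: (p.reverse ++ [])) m, by rw [lehmerFrom_append]; rfl, ?_⟩
      (ih p (hp.sublist ((List.sublist_cons_self _ _).append_left _)))
    rw [lehmerFrom_append, ← lehmerFrom_eq_afterDelete m _ hx]
  | @cons_cons l m x _ ih =>
    intro p hp
    simpa using ih (p ++ [x]) (by simpa using hp)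

lemma lehmerFrom_map_congr {ι β : Type*} [LinearOrder β] {f : ι → α} {g : ι → β}
    (h : ∀ a b, f a < f b ↔ g a < g b) (l : List ι) :
    ∀ p : List ι, lehmerFrom (p.map f) (l.map f) = lehmerFrom (p.map g) (l.map g) := by
  induction l with
  | nil => intro p; rfl
  | cons x l ih =>
    intro p
    have := ih (x :: p)
    simp only [List.map_cons, lehmerFrom] at this ⊢
    rw [this, List.countP_map, List.countP_map]
    simp only [Function.comp_def, h]

-- The last entry of the code is the number of letters above the last letter, which determines that
-- letter; hence a word is recovered from the right.
lemma eq_of_perm_of_lehmerFrom_eq (l : List α) : ∀ m : List α, l.Perm m →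
    lehmerFrom [] l = lehmerFrom [] m → l = m := by
  induction l using List.reverseRecOn with
  | nil => exact fun m h _ => h.nil_eq
  | append_singleton l x ih =>
    intro m h hc
    rcases m.eq_nil_or_concat' with rfl | ⟨m, y, rfl⟩
    · simp at h
    simp only [lehmerFrom_append, List.append_nil, lehmerFrom] at hc
    obtain ⟨hinit, hlast⟩ := List.append_inj' hc rfl
    have hcount : (l ++ [x]).countP (x < ·) = (l ++ [x]).countP (y < ·) := by
      rw [h.countP_eq (y < ·)]
      simpa using hlast
    have hxy : x = y := by
      rcases lt_trichotomy x y with hlt | heq | hlt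
      · exact absurd hcount (countP_lt_lt_of_lt hlt (h.mem_iff.mpr (by simp))).ne'
      · exact heq
      · exact absurd hcount (countP_lt_lt_of_lt hlt (by simp)).ne
    subst hxy
    rw [ih m ((List.perm_append_right_iff _).mp h) hinit]

end LehmerCode

/-- The Lehmer code of a permutation. -/
def permCode {n : ℕ} (σ : Equiv.Perm (Fin n)) : List ℕ := lehmerFrom [] ((List.finRange n).map σ)

lemma length_permCode {n : ℕ} (σ : Equiv.Perm (Fin n)) : (permCode σ).length = n := by
  simp [permCode, length_lehmerFrom]

lemma isLehmer_permCode {n : ℕ} (σ : Equiv.Perm (Fin n)) : IsLehmer (permCode σ) :=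
  isLehmerFrom_lehmerFrom _ []

lemma PermContains.reflTransGen_deletion {k n : ℕ} {τ : Equiv.Perm (Fin k)}
    {σ : Equiv.Perm (Fin n)} (h : PermContains τ σ) :
    Relation.ReflTransGen Deletion (permCode σ) (permCode τ) := by
  obtain ⟨f, hf, hlt⟩ := h
  have hτ : permCode τ = lehmerFrom [] (((List.finRange k).map f).map σ) := by
    simpa [permCode, List.map_map, Function.comp_def] using
      lehmerFrom_map_congr (f := τ) (g := fun a => σ (f a)) hlt (List.finRange k) []
  have hsub : ((List.finRange k).map f).Sublist (List.finRange n) := by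
    refine List.sublist_of_subperm_of_pairwise (r := (· < ·))
      (List.subperm_of_subset ((List.nodup_finRange k).map hf.injective)
        fun x _ => List.mem_finRange x) ?_ (List.pairwise_lt_finRange n)
    exact List.pairwise_map.mpr ((List.pairwise_lt_finRange k).imp (hf ·))
  rw [hτ]
  exact reflTransGen_deletion_of_sublist (hsub.map σ) []
    ((List.nodup_finRange n).map σ.injective)

lemma permCode_injective {n : ℕ} : Function.Injective (permCode (n := n)) := by
  intro σ τ h
  have hperm : ((List.finRange n).map σ).Perm ((List.finRange n).map τ) :=
    σ.map_finRange_perm.trans τ.map_finRange_perm.symm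
  have := eq_of_perm_of_lehmerFrom_eq _ _ hperm h
  exact Equiv.ext fun a => List.map_inj_left.mp this a (List.mem_finRange a)

/-- The codes of length `n` in `P`. -/
def level (P : Set (List ℕ)) (n : ℕ) : Set (List ℕ) := {l | l ∈ P ∧ l.length = n}

lemma level_isLehmer_eq_range (n : ℕ) :
    level {l | IsLehmer l} n =
      Set.range fun f : ∀ i : Fin n, Fin (i.val + 1) => List.ofFn fun i => (f i : ℕ) := by
  ext l
  constructor
  · rintro ⟨hl, rfl⟩
    have hle := (isLehmerFrom_iff_getElem l 0).mp hl
    exact ⟨fun i => ⟨l[i], by simpa [Nat.lt_succ_iff] using hle i i.2⟩, List.ofFn_getElem⟩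
  · rintro ⟨f, rfl⟩
    refine ⟨(isLehmerFrom_iff_getElem _ 0).mpr fun i hi => ?_, List.length_ofFn⟩
    simpa [Nat.lt_succ_iff] using (f ⟨i, by simpa using hi⟩).2

lemma ncard_level_isLehmer (n : ℕ) : (level {l | IsLehmer l} n).ncard = n.factorial := by
  have hinj : Function.Injective
      fun f : ∀ i : Fin n, Fin (i.val + 1) => List.ofFn fun i => (f i : ℕ) := fun f g h =>
    funext fun i => Fin.ext (congrFun (List.ofFn_injective h) i)
  rw [level_isLehmer_eq_range, ← Set.image_univ, Set.ncard_image_of_injective _ hinj,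
    Set.ncard_univ, Nat.card_eq_fintype_card, Fintype.card_pi]
  simp only [Fintype.card_fin]
  rw [Fin.prod_univ_eq_prod_range (fun i => i + 1) n, Finset.prod_range_add_one_eq_factorial]

lemma finite_level {P : Set (List ℕ)} (hP : ∀ l ∈ P, IsLehmer l) (n : ℕ) : (level P n).Finite := by
  refine Set.Finite.subset (s := level {l | IsLehmer l} n) ?_ fun l hl => ⟨hP l hl.1, hl.2⟩
  rw [level_isLehmer_eq_range]
  exact Set.finite_range _

lemma range_permCode (n : ℕ) : Set.range (permCode (n := n)) = level {l | IsLehmer l} n := by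
  refine Set.eq_of_subset_of_ncard_le ?_ ?_ (finite_level (fun _ h => h) n)
  · rintro _ ⟨σ, rfl⟩
    exact ⟨isLehmer_permCode σ, length_permCode σ⟩
  · rw [ncard_level_isLehmer, ← Set.image_univ, Set.ncard_image_of_injective _ permCode_injective,
      Set.ncard_univ, Nat.card_eq_fintype_card, Fintype.card_perm, Fintype.card_fin]

/-- A permutation class, in terms of the Lehmer codes of its elements: a set of Lehmer codes that is
closed under deletion of points. -/
structure IsCodeClass (P : Set (List ℕ)) : Prop where
  isLehmer : ∀ l ∈ P, IsLehmer l
  deletion_mem : ∀ u ∈ P, ∀ v, Deletion u v → v ∈ P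

lemma IsCodeClass.isPermClass {P : Set (List ℕ)} (hP : IsCodeClass P) :
    IsPermClass fun _ => {σ | permCode σ ∈ P} := by
  intro n σ hσ k τ hτ
  suffices ∀ v, Relation.ReflTransGen Deletion (permCode σ) v → v ∈ P from
    this _ hτ.reflTransGen_deletion
  intro v hv
  induction hv with
  | refl => exact hσ
  | tail _ hdel hu => exact hP.deletion_mem _ hu _ hdel

lemma IsCodeClass.card_permCode_mem {P : Set (List ℕ)} (hP : IsCodeClass P) (n : ℕ) :
    Nat.card {σ : Equiv.Perm (Fin n) | permCode σ ∈ P} = (level P n).ncard := by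
  have himage : level P n = permCode '' {σ : Equiv.Perm (Fin n) | permCode σ ∈ P} := by
    ext l
    constructor
    · rintro ⟨hl, hn⟩
      obtain ⟨σ, rfl⟩ : l ∈ Set.range (permCode (n := n)) := by
        rw [range_permCode]; exact ⟨hP.isLehmer l hl, hn⟩
      exact ⟨σ, hl, rfl⟩
    · rintro ⟨σ, hσ, rfl⟩
      exact ⟨hσ, length_permCode σ⟩
  rw [himage, Set.ncard_image_of_injective _ permCode_injective, Nat.card_coe_set_eq]

/-! ### Exponential growth of sequences -/

/-- The sequence `c` grows exponentially at rate `γ`: it is bounded above by a multiple of `r ^ n`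
for every `r > γ`, and below for every positive `r < γ`. -/
structure HasExpRate (c : ℕ → ℝ) (γ : ℝ) : Prop where
  upper : ∀ r, γ < r → ∃ K > 0, ∀ n, c n ≤ K * r ^ n
  lower : ∀ r, 0 < r → r < γ → ∃ K > 0, ∀ n, r ^ n ≤ K * c n

lemma tendsto_rpow_one_div_mul_const {K : ℝ} (hK : 0 < K) (r : ℝ) :
    Tendsto (fun n : ℕ => K ^ (1 / (n : ℝ)) * r) atTop (nhds r) := by
  have hroot : Tendsto (fun n : ℕ => K ^ (1 / (n : ℝ))) atTop (nhds 1) := by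
    simpa [Function.comp_def] using (Real.continuousAt_const_rpow hK.ne' (b := 0)).tendsto.comp
      tendsto_one_div_atTop_nhds_zero_nat
  simpa using hroot.mul_const r

lemma rpow_one_div_mul_pow {K r : ℝ} (hK : 0 < K) (hr : 0 ≤ r) {n : ℕ} (hn : n ≠ 0) :
    (K * r ^ n) ^ (1 / (n : ℝ)) = K ^ (1 / (n : ℝ)) * r := by
  rw [Real.mul_rpow hK.le (by positivity), one_div, Real.pow_rpow_inv_natCast hr hn]

lemma HasExpRate.tendsto_rpow {c : ℕ → ℝ} {γ : ℝ} (h : HasExpRate c γ) (hγ : 0 < γ) :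
    Tendsto (fun n : ℕ => c n ^ (1 / (n : ℝ))) atTop (nhds γ) := by
  refine tendsto_order.mpr ⟨fun a ha => ?_, fun b hb => ?_⟩
  · obtain ⟨r, har, hrγ⟩ := exists_between (max_lt ha hγ)
    obtain ⟨har, hr⟩ := max_lt_iff.mp har
    obtain ⟨K, hK, hlow⟩ := h.lower r hr hrγ
    filter_upwards [(tendsto_rpow_one_div_mul_const (inv_pos.mpr hK) r).eventually_const_lt har,
      eventually_ne_atTop 0] with n hn hn0
    refine hn.trans_le ?_
    rw [← rpow_one_div_mul_pow (inv_pos.mpr hK) hr.le hn0]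
    have : K⁻¹ * r ^ n ≤ c n := (inv_mul_le_iff₀ hK).mpr (hlow n)
    gcongr
  · obtain ⟨r, hγr, hrb⟩ := exists_between hb
    obtain ⟨K, hK, hup⟩ := h.upper r hγr
    obtain ⟨K', hK', hlow⟩ := h.lower (γ / 2) (by positivity) (by linarith)
    filter_upwards [(tendsto_rpow_one_div_mul_const hK r).eventually_lt_const hrb,
      eventually_ne_atTop 0] with n hn hn0
    refine lt_of_le_of_lt ?_ hn
    rw [← rpow_one_div_mul_pow hK (hγ.trans hγr).le hn0]
    have : 0 ≤ c n :=
      nonneg_of_mul_nonneg_right ((by positivity : 0 ≤ (γ / 2) ^ n).trans (hlow n)) hK'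
    exact Real.rpow_le_rpow this (hup n) (by positivity)

section Supermultiplicative

variable {c : ℕ → ℝ} (hmul : ∀ m n, c m * c n ≤ c (m + n)) (h0 : 1 ≤ c 0)
include hmul h0

lemma one_le_of_supermultiplicative (h1 : 1 ≤ c 1) (n : ℕ) : 1 ≤ c n := by
  induction n with
  | zero => exact h0
  | succ n ih => exact (one_le_mul_of_one_le_of_one_le ih h1).trans (hmul n 1)

lemma pow_le_of_supermultiplicative {m : ℕ} (hm : 0 ≤ c m) (k : ℕ) : c m ^ k ≤ c (m * k) := by
  induction k with
  | zero => simpa using h0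
  | succ k ih =>
    calc c m ^ (k + 1) = c m ^ k * c m := pow_succ _ _
      _ ≤ c (m * k) * c m := by gcongr
      _ ≤ c (m * (k + 1)) := hmul _ _

lemma pow_le_mul_of_supermultiplicative (h1 : 1 ≤ c 1) {r : ℝ} (hr : 0 < r) {m : ℕ} (hm : 0 < m)
    (hrm : r ^ m ≤ c m) (n : ℕ) : r ^ n ≤ (1 + r) ^ m * c n := by
  have hone := one_le_of_supermultiplicative hmul h0 h1
  have hrem : r ^ (n % m) ≤ (1 + r) ^ m :=
    calc r ^ (n % m) ≤ (1 + r) ^ (n % m) := by gcongr; linarith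
      _ ≤ (1 + r) ^ m := pow_le_pow_right₀ (by linarith) (Nat.mod_lt n hm).le
  have hquot : r ^ (m * (n / m)) ≤ c n :=
    calc r ^ (m * (n / m)) = (r ^ m) ^ (n / m) := pow_mul _ _ _
      _ ≤ c m ^ (n / m) := by gcongr
      _ ≤ c (m * (n / m)) :=
        pow_le_of_supermultiplicative hmul h0 (zero_le_one.trans (hone m)) _
      _ ≤ c (m * (n / m)) * c (n % m) :=
        le_mul_of_one_le_right (zero_le_one.trans (hone _)) (hone _)
      _ ≤ c n := by simpa only [Nat.div_add_mod] using hmul (m * (n / m)) (n % m)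
  calc r ^ n = r ^ (n % m) * r ^ (m * (n / m)) := by rw [← pow_add, Nat.mod_add_div]
    _ ≤ (1 + r) ^ m * c n := by gcongr

lemma HasExpRate.of_supermultiplicative (h1 : 1 ≤ c 1) {y : ℝ} (hy : 0 < y)
    (hle : ∀ n, c n * y ^ n ≤ 1) (hsum : ¬Summable fun n => c n * y ^ n) :
    HasExpRate c (1 / y) := by
  refine ⟨fun r hr => ⟨1, one_pos, fun n => ?_⟩, fun r hr hry => ?_⟩
  · calc c n ≤ (1 / y) ^ n := by
          rw [div_pow, one_pow, le_div_iff₀ (by positivity)]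
          exact hle n
      _ ≤ 1 * r ^ n := by rw [one_mul]; gcongr
  · have hone := one_le_of_supermultiplicative hmul h0 h1
    obtain ⟨m, hm, hrm⟩ : ∃ m, 0 < m ∧ r ^ m ≤ c m := by
      by_contra! hlt
      have hgeom : Summable fun n => (r * y) ^ (n + 1) :=
        (summable_nat_add_iff 1).mpr <|
          summable_geometric_of_lt_one (by positivity) ((lt_div_iff₀ hy).mp hry)
      refine hsum ((summable_nat_add_iff 1).mp (hgeom.of_nonneg_of_le (fun n => ?_) fun n => ?_))
      · exact mul_nonneg (zero_le_one.trans (hone _)) (by positivity)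
      · rw [mul_pow]
        exact mul_le_mul_of_nonneg_right (hlt _ n.succ_pos).le (by positivity)
    exact ⟨(1 + r) ^ m, by positivity, pow_le_mul_of_supermultiplicative hmul h0 h1 hr hm hrm⟩

end Supermultiplicative

lemma exists_natCast_add_one_le_mul_pow {t : ℝ} (ht : 1 < t) :
    ∃ K > 0, ∀ n : ℕ, (n + 1 : ℝ) ≤ K * t ^ n := by
  have hx : 0 < t - 1 := sub_pos.mpr ht
  refine ⟨1 + 1 / (t - 1), by positivity, fun n => ?_⟩
  calc (n + 1 : ℝ) ≤ n + 1 + (1 / (t - 1) + n * (t - 1)) :=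
        le_add_of_nonneg_right (by positivity)
    _ = (1 + 1 / (t - 1)) * (1 + n * (t - 1)) := by field_simp; ring
    _ ≤ (1 + 1 / (t - 1)) * t ^ n := by
      gcongr
      simpa using one_add_mul_le_pow (by linarith : -2 ≤ t - 1) n

lemma HasExpRate.add_one_of_binomial {c d : ℕ → ℝ} {γ : ℝ} (hc : HasExpRate c γ) (hγ : 0 < γ)
    (hlow : ∀ n, ∀ k ≤ n, c k * n.choose k ≤ d n)
    (hup : ∀ n, d n ≤ ∑ k ∈ Finset.range (n + 1), c k * n.choose k) : HasExpRate d (γ + 1) := by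
  have hbinom (s : ℝ) (n : ℕ) :
      ∑ k ∈ Finset.range (n + 1), s ^ k * n.choose k = (s + 1) ^ n := by
    simp [add_pow]
  refine ⟨fun r hr => ?_, fun r hr hrγ => ?_⟩
  · obtain ⟨K, hK, hcK⟩ := hc.upper (r - 1) (by linarith)
    refine ⟨K, hK, fun n => ?_⟩
    calc d n ≤ ∑ k ∈ Finset.range (n + 1), c k * n.choose k := hup n
      _ ≤ ∑ k ∈ Finset.range (n + 1), K * ((r - 1) ^ k * n.choose k) := by
        refine Finset.sum_le_sum fun k _ => ?_
        rw [← mul_assoc]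
        gcongr
        exact hcK k
      _ = K * r ^ n := by rw [← Finset.mul_sum, hbinom, sub_add_cancel]
  · obtain ⟨s, hs, hsγ⟩ := exists_between (max_lt hγ (sub_lt_iff_lt_add.mpr hrγ))
    obtain ⟨hs0, hrs⟩ := max_lt_iff.mp hs
    obtain ⟨K, hK, hcK⟩ := hc.lower s hs0 hsγ
    have hsum (n : ℕ) : (s + 1) ^ n ≤ (n + 1) * (K * d n) :=
      calc (s + 1) ^ n = ∑ k ∈ Finset.range (n + 1), s ^ k * n.choose k := (hbinom s n).symm
        _ ≤ ∑ _k ∈ Finset.range (n + 1), K * d n := by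
          refine Finset.sum_le_sum fun k hk => ?_
          calc s ^ k * n.choose k ≤ K * c k * n.choose k := by gcongr; exact hcK k
            _ = K * (c k * n.choose k) := mul_assoc _ _ _
            _ ≤ K * d n := by gcongr; exact hlow n k (Finset.mem_range_succ_iff.mp hk)
        _ = (n + 1) * (K * d n) := by simp
    obtain ⟨L, hL, hLn⟩ := exists_natCast_add_one_le_mul_pow
      ((one_lt_div hr).mpr (by linarith : r < s + 1))
    refine ⟨L * K, by positivity, fun n => ?_⟩
    have hd : 0 ≤ K * d n := nonneg_of_mul_nonneg_right
      ((by positivity : 0 ≤ (s + 1) ^ n).trans (hsum n)) (by positivity)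
    refine le_of_mul_le_mul_right ?_ (by positivity : 0 < ((s + 1) / r) ^ n)
    calc r ^ n * ((s + 1) / r) ^ n = (s + 1) ^ n := by rw [← mul_pow, mul_div_cancel₀ _ hr.ne']
      _ ≤ (n + 1) * (K * d n) := hsum n
      _ ≤ L * ((s + 1) / r) ^ n * (K * d n) := by gcongr; exact hLn n
      _ = L * K * d n * ((s + 1) / r) ^ n := by ring

/-! ### Sum closures and their growth rates -/

/-- A sum-indecomposable code: no proper suffix is itself a Lehmer code. -/
def IsIndecomposable (u : List ℕ) : Prop :=
  u ≠ [] ∧ IsLehmer u ∧ ∀ a b, u = a ++ b → a ≠ [] → b ≠ [] → ¬IsLehmer b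

/-- The concatenations of codes from `D`: concatenating Lehmer codes is the direct sum of
permutations. -/
def sumClosure (D : Set (List ℕ)) : Set (List ℕ) := KStar.kstar (α := Language ℕ) D

lemma nil_mem_sumClosure (D : Set (List ℕ)) : [] ∈ sumClosure D := Language.nil_mem_kstar _

lemma append_mem_sumClosure {D : Set (List ℕ)} {a b : List ℕ} (ha : a ∈ sumClosure D)
    (hb : b ∈ sumClosure D) : a ++ b ∈ sumClosure D :=
  (kstar_mul_kstar (α := Language ℕ) D).le (Language.append_mem_mul ha hb)

lemma subset_sumClosure (D : Set (List ℕ)) : D ⊆ sumClosure D :=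
  le_kstar (α := Language ℕ)

lemma sumClosure_mono {D E : Set (List ℕ)} (h : D ⊆ E) : sumClosure D ⊆ sumClosure E := by
  rintro l ⟨L, rfl, hL⟩
  exact ⟨L, rfl, fun u hu => h (hL u hu)⟩

lemma sumClosure_eq (D : Set (List ℕ)) :
    sumClosure D = {[]} ∪ ⋃ u : D, (u.1 ++ ·) '' sumClosure D := by
  ext l
  have h : l ∈ sumClosure D ↔ l = [] ∨ ∃ u ∈ D, ∃ v ∈ sumClosure D, u ++ v = l :=
    (Set.ext_iff.mp (Language.one_add_self_mul_kstar_eq_kstar D) l).symm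
  simpa using h

@[elab_as_elim]
lemma sumClosure_induction {D : Set (List ℕ)} {p : (l : List ℕ) → l ∈ sumClosure D → Prop}
    (nil : p [] (nil_mem_sumClosure D))
    (append : ∀ u (hu : u ∈ D) l (hl : l ∈ sumClosure D), p l hl →
      p (u ++ l) (append_mem_sumClosure (subset_sumClosure D hu) hl))
    {l : List ℕ} (hl : l ∈ sumClosure D) : p l hl := by
  obtain ⟨L, rfl, hL⟩ := hl
  induction L with
  | nil => exact nil
  | cons u L ih =>
    have hL' : ∀ v ∈ L, v ∈ D := fun v hv => hL v (List.mem_cons_of_mem u hv)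
    exact append u (hL u List.mem_cons_self) L.flatten ⟨L, rfl, hL'⟩ (ih hL')

lemma isLehmer_of_mem_sumClosure {D : Set (List ℕ)} (hD : ∀ u ∈ D, IsLehmer u) :
    ∀ l ∈ sumClosure D, IsLehmer l := by
  intro l hl
  induction hl using sumClosure_induction with
  | nil => trivial
  | append u hu l _ ih => exact (hD u hu).append ih

lemma Deletion.append_cases {u l v : List ℕ} (h : Deletion (u ++ l) v) :
    (∃ a c b, u = a ++ c :: b ∧ v = a ++ afterDelete c (b ++ l)) ∨
      ∃ l', Deletion l l' ∧ v = u ++ l' := by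
  obtain ⟨a, c, b, hab, rfl⟩ := h
  rcases List.append_eq_append_iff.mp hab with ⟨a', rfl, hl'⟩ | ⟨b', rfl, hb'⟩
  · exact .inr ⟨a' ++ afterDelete c b, ⟨a', c, b, hl', rfl⟩, by rw [List.append_assoc]⟩
  · rcases b' with _ | ⟨c', b'⟩
    · exact .inr ⟨afterDelete c b, ⟨[], c, b, hb'.symm, rfl⟩, by simp⟩
    · rw [List.cons_append, List.cons.injEq] at hb'
      obtain ⟨rfl, rfl⟩ := hb'
      exact .inl ⟨a, c, b', rfl, rfl⟩

lemma Deletion.append_cases_of_isLehmer {u l v : List ℕ} (hl : IsLehmer l)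
    (h : Deletion (u ++ l) v) :
    (∃ u', Deletion u u' ∧ v = u' ++ l) ∨ ∃ l', Deletion l l' ∧ v = u ++ l' := by
  refine h.append_cases.imp_left ?_
  rintro ⟨a, c, b, rfl, rfl⟩
  exact ⟨_, ⟨a, c, b, rfl, rfl⟩, by rw [afterDelete_append b hl, List.append_assoc]⟩

lemma isCodeClass_sumClosure {D : Set (List ℕ)} (hD : ∀ u ∈ D, IsLehmer u)
    (hdel : ∀ u ∈ D, ∀ v, Deletion u v → v ∈ sumClosure D) : IsCodeClass (sumClosure D) := by
  refine ⟨isLehmer_of_mem_sumClosure hD, fun l hl => ?_⟩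
  induction hl using sumClosure_induction with
  | nil => rintro v ⟨a, c, b, h, _⟩; simp at h
  | append u hu l hl ih =>
    intro v hv
    rcases hv.append_cases_of_isLehmer (isLehmer_of_mem_sumClosure hD l hl) with
      ⟨u', hu', rfl⟩ | ⟨l', hl', rfl⟩
    · exact append_mem_sumClosure (hdel u hu u' hu') hl
    · exact append_mem_sumClosure (subset_sumClosure D hu) (ih l' hl')

lemma IsIndecomposable.append_inj {u u' v v' : List ℕ} (hu : IsIndecomposable u)
    (hu' : IsIndecomposable u') (hv : IsLehmer v) (hv' : IsLehmer v') (h : u ++ v = u' ++ v') :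
    u = u' ∧ v = v' := by
  have eq_nil {u u' a v : List ℕ} (hu : IsIndecomposable u) (hu' : IsIndecomposable u')
      (hv : IsLehmer (a ++ v)) (h : u' = u ++ a) : a = [] := by
    by_contra ha
    exact hu'.2.2 u a h hu.1 ha hv.of_append
  rcases List.append_eq_append_iff.mp h with ⟨a, hu'a, rfl⟩ | ⟨a, hua, rfl⟩
  · obtain rfl := eq_nil hu hu' hv hu'a
    simp [hu'a]
  · obtain rfl := eq_nil hu' hu hv' hua
    simp [hua]

/-- The generating function of `X` by length, evaluated at `q`. -/
def weight (q : ENNReal) (X : Set (List ℕ)) : ENNReal := ∑' u : X, q ^ u.1.length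

section Weight

variable (q : ENNReal)

lemma weight_singleton (u : List ℕ) : weight q {u} = q ^ u.length :=
  tsum_singleton u fun u : List ℕ => q ^ u.length

lemma weight_mono {X Y : Set (List ℕ)} (h : X ⊆ Y) : weight q X ≤ weight q Y :=
  ENNReal.tsum_mono_subtype (fun u : List ℕ => q ^ u.length) h

lemma weight_union {X Y : Set (List ℕ)} (h : Disjoint X Y) :
    weight q (X ∪ Y) = weight q X + weight q Y :=
  Summable.tsum_union_disjoint (f := fun u : List ℕ => q ^ u.length) h ENNReal.summable
    ENNReal.summable

lemma weight_iUnion {ι : Type*} {X : ι → Set (List ℕ)} (h : Pairwise (Function.onFun Disjoint X)) :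
    weight q (⋃ i, X i) = ∑' i, weight q (X i) := by
  rw [weight, ← (Set.unionEqSigmaOfDisjoint h).symm.tsum_eq, ENNReal.tsum_sigma']
  rfl

lemma weight_iUnion_le {ι : Type*} (X : ι → Set (List ℕ)) :
    weight q (⋃ i, X i) ≤ ∑' i, weight q (X i) :=
  ENNReal.tsum_iUnion_le_tsum (fun u : List ℕ => q ^ u.length) X

lemma weight_append_image (u : List ℕ) (X : Set (List ℕ)) :
    weight q ((u ++ ·) '' X) = q ^ u.length * weight q X := by
  rw [weight, tsum_image (fun l : List ℕ => q ^ l.length) (List.append_right_injective u).injOn]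
  simp only [List.length_append, pow_add, ENNReal.tsum_mul_left, weight]

lemma weight_image_append (X : Set (List ℕ)) (u : List ℕ) :
    weight q ((· ++ u) '' X) = weight q X * q ^ u.length := by
  rw [weight, tsum_image (fun l : List ℕ => q ^ l.length) (List.append_left_injective u).injOn]
  simp only [List.length_append, pow_add, ENNReal.tsum_mul_right, weight]

lemma weight_level {P : Set (List ℕ)} (hP : ∀ l ∈ P, IsLehmer l) (n : ℕ) :
    weight q (level P n) = (level P n).ncard * q ^ n := by
  have hlen (u : level P n) : q ^ u.1.length = q ^ n := by rw [u.2.2]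
  rw [weight, tsum_congr hlen, ENNReal.tsum_const, ENat.card_coe_set_eq,
    ← (finite_level hP n).cast_ncard_eq, ENat.toENNReal_coe]

lemma weight_eq_tsum_level (P : Set (List ℕ)) : weight q P = ∑' n, weight q (level P n) := by
  rw [← weight_iUnion]
  · congr 1
    ext l
    simp [level]
  · intro m n hmn
    exact Set.disjoint_left.mpr fun l hm hn => hmn (hm.2.symm.trans hn.2)

lemma weight_level_sumClosure_le_one {D : Set (List ℕ)} (hnil : [] ∉ D) (hD : weight q D ≤ 1)
    (n : ℕ) : weight q (level (sumClosure D) n) ≤ 1 := by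
  induction n using Nat.strong_induction_on with
  | _ n ih =>
    rcases n.eq_zero_or_pos with rfl | hn
    · calc weight q (level (sumClosure D) 0) ≤ weight q {[]} :=
            weight_mono q fun l hl => List.length_eq_zero_iff.mp hl.2
        _ = 1 := by simp [weight_singleton]
    have hsplit : level (sumClosure D) n ⊆
        ⋃ u : D, (u.1 ++ ·) '' level (sumClosure D) (n - u.1.length) := by
      rintro l ⟨hl, rfl⟩
      rw [sumClosure_eq] at hl
      rcases hl with rfl | hl
      · exact absurd hn (lt_irrefl 0)
      · obtain ⟨u, v, hv, rfl⟩ := Set.mem_iUnion.mp hl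
        exact Set.mem_iUnion.mpr ⟨u, v, ⟨hv, by simp⟩, rfl⟩
    calc weight q (level (sumClosure D) n)
        ≤ ∑' u : D, weight q ((u.1 ++ ·) '' level (sumClosure D) (n - u.1.length)) :=
          (weight_mono q hsplit).trans (weight_iUnion_le q _)
      _ ≤ ∑' u : D, q ^ u.1.length := by
          refine ENNReal.tsum_le_tsum fun u => ?_
          have hu : 0 < u.1.length := List.length_pos_iff.mpr fun h => hnil (h ▸ u.2)
          rw [weight_append_image]
          exact mul_le_of_le_one_right' (ih _ (by omega))
      _ ≤ 1 := hD

lemma weight_sumClosure_eq_top {D : Set (List ℕ)} (hD : ∀ u ∈ D, IsIndecomposable u)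
    (hW : weight q D = 1) : weight q (sumClosure D) = ⊤ := by
  have hlehmer := isLehmer_of_mem_sumClosure fun u hu => (hD u hu).2.1
  have hdisj :
      Pairwise (Function.onFun Disjoint fun u : D => (u.1 ++ ·) '' sumClosure D) := by
    rintro u u' huu'
    refine Set.disjoint_left.mpr ?_
    rintro _ ⟨v, hv, rfl⟩ ⟨v', hv', h⟩
    exact huu' (Subtype.ext ((hD u u.2).append_inj (hD u' u'.2) (hlehmer v hv) (hlehmer v' hv')
      h.symm).1)
  have hnil : Disjoint {[]} (⋃ u : D, (u.1 ++ ·) '' sumClosure D) := by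
    simp only [Set.disjoint_singleton_left, Set.mem_iUnion, not_exists]
    rintro u ⟨v, -, h⟩
    exact (hD u u.2).1 (List.append_eq_nil_iff.mp h).1
  have hrec : weight q (sumClosure D) = 1 + weight q (sumClosure D) := by
    conv_lhs => rw [sumClosure_eq, weight_union q hnil, weight_iUnion q hdisj]
    simp only [weight_singleton, weight_append_image, ENNReal.tsum_mul_right, List.length_nil,
      pow_zero]
    rw [← weight, hW, one_mul]
  by_contra htop
  exact (ENNReal.lt_add_right htop one_ne_zero).ne (hrec.trans (add_comm _ _))

end Weight

lemma ncard_level_sumClosure_mul_le (D : Set (List ℕ)) (hD : ∀ u ∈ D, IsLehmer u) (m n : ℕ) :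
    (level (sumClosure D) m).ncard * (level (sumClosure D) n).ncard ≤
      (level (sumClosure D) (m + n)).ncard := by
  rw [← Set.ncard_prod]
  refine Set.ncard_le_ncard_of_injOn (fun p : List ℕ × List ℕ => p.1 ++ p.2) ?_ ?_
    (finite_level (isLehmer_of_mem_sumClosure hD) _)
  · rintro ⟨u, v⟩ ⟨hu, hv⟩
    exact ⟨append_mem_sumClosure hu.1 hv.1, by simp [hu.2, hv.2]⟩
  · rintro ⟨u, v⟩ ⟨hu, -⟩ ⟨u', v'⟩ ⟨hu', -⟩ h
    exact Prod.ext_iff.mpr (List.append_inj h (hu.2.trans hu'.2.symm))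

lemma hasExpRate_sumClosure {D : Set (List ℕ)} (hD : ∀ u ∈ D, IsIndecomposable u) (h0 : [0] ∈ D)
    {y : ℝ} (hy : 0 < y) (hW : weight (ENNReal.ofReal y) D = 1) :
    HasExpRate (fun n => (level (sumClosure D) n).ncard) (1 / y) := by
  have hlehmer : ∀ u ∈ D, IsLehmer u := fun u hu => (hD u hu).2.1
  have hfin := finite_level (isLehmer_of_mem_sumClosure hlehmer)
  have hlevel (n : ℕ) : weight (ENNReal.ofReal y) (level (sumClosure D) n) =
      ENNReal.ofReal ((level (sumClosure D) n).ncard * y ^ n) := by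
    rw [weight_level _ (isLehmer_of_mem_sumClosure hlehmer), ENNReal.ofReal_mul (by positivity),
      ENNReal.ofReal_pow hy.le, ENNReal.ofReal_natCast]
  have one_le {n : ℕ} {l : List ℕ} (hl : l ∈ level (sumClosure D) n) :
      (1 : ℝ) ≤ (level (sumClosure D) n).ncard := by
    exact_mod_cast (Set.ncard_pos (hfin n)).mpr ⟨l, hl⟩
  refine .of_supermultiplicative
    (fun m n => by exact_mod_cast ncard_level_sumClosure_mul_le D hlehmer m n)
    (one_le ⟨nil_mem_sumClosure D, rfl⟩) (one_le ⟨subset_sumClosure D h0, rfl⟩) hy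
    (fun n => ?_) fun hsum => ?_
  · have := weight_level_sumClosure_le_one _ (fun h => (hD [] h).1 rfl) hW.le n
    rwa [hlevel, ENNReal.ofReal_le_one] at this
  · have htop := weight_sumClosure_eq_top _ hD hW
    rw [weight_eq_tsum_level, tsum_congr hlevel] at htop
    exact hsum.tsum_ofReal_ne_top htop

/-- `γ` is the exponential growth rate of a permutation class. -/
def IsCodeRate (γ : ℝ) : Prop :=
  ∃ P, IsCodeClass P ∧ HasExpRate (fun n => (level P n).ncard) γ

lemma IsCodeRate.exists_isPermClass {γ : ℝ} (h : IsCodeRate γ) (hγ : 0 < γ) :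
    ∃ C : ∀ n : ℕ, Set (Equiv.Perm (Fin n)), IsPermClass C ∧
      Tendsto (fun n : ℕ => (Nat.card ↥(C n) : ℝ) ^ (1 / (n : ℝ))) atTop (nhds γ) := by
  obtain ⟨P, hP, hrate⟩ := h
  refine ⟨_, hP.isPermClass, ?_⟩
  simpa only [hP.card_permCode_mem] using hrate.tendsto_rpow hγ

lemma isCodeRate_of_weight_eq_one {D : Set (List ℕ)} (hD : ∀ u ∈ D, IsIndecomposable u)
    (h0 : [0] ∈ D) (hdel : ∀ u ∈ D, ∀ v, Deletion u v → v ∈ sumClosure D) {y : ℝ} (hy : 0 < y)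
    (hW : weight (ENNReal.ofReal y) D = 1) : IsCodeRate (1 / y) :=
  ⟨sumClosure D, isCodeClass_sumClosure (fun u hu => (hD u hu).2.1) hdel,
    hasExpRate_sumClosure hD h0 hy hW⟩

/-! ### Adding one to a growth rate -/

/-- The nonincreasing lists of length `m` with entries at most `k`. -/
def nonincreasingLists (m k : ℕ) : Set (List ℕ) := {l | l.length = m ∧ (k :: l).IsChain (· ≥ ·)}

lemma nonincreasingLists_zero_left (k : ℕ) : nonincreasingLists 0 k = {[]} := by
  ext l
  refine ⟨fun h => List.length_eq_zero_iff.mp h.1, ?_⟩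
  rintro rfl
  exact ⟨rfl, .singleton k⟩

lemma nonincreasingLists_succ_zero (m : ℕ) :
    nonincreasingLists (m + 1) 0 = List.cons 0 '' nonincreasingLists m 0 := by
  ext l
  rcases l with _ | ⟨x, l⟩
  · simp [nonincreasingLists]
  · simp only [nonincreasingLists, Set.mem_ofPred_eq, List.length_cons, List.isChain_cons_cons,
      Set.mem_image, List.cons.injEq, ge_iff_le, Nat.le_zero]
    constructor
    · rintro ⟨hl, rfl, h⟩
      exact ⟨l, ⟨by omega, h⟩, rfl, rfl⟩
    · rintro ⟨l, ⟨rfl, h⟩, rfl, rfl⟩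
      exact ⟨rfl, rfl, h⟩

lemma nonincreasingLists_succ_succ (m k : ℕ) : nonincreasingLists (m + 1) (k + 1) =
    List.cons (k + 1) '' nonincreasingLists m (k + 1) ∪ nonincreasingLists (m + 1) k := by
  ext l
  rcases l with _ | ⟨x, l⟩
  · simp [nonincreasingLists]
  · simp only [nonincreasingLists, Set.mem_ofPred_eq, List.length_cons, List.isChain_cons_cons,
      Set.mem_union, Set.mem_image, List.cons.injEq, ge_iff_le, Nat.le_succ_iff]
    constructor
    · rintro ⟨hl, hx | rfl, h⟩
      · exact .inr ⟨hl, hx, h⟩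
      · exact .inl ⟨l, ⟨by omega, h⟩, rfl, rfl⟩
    · rintro (⟨l, ⟨rfl, h⟩, rfl, rfl⟩ | ⟨hl, hx, h⟩)
      · exact ⟨rfl, .inr rfl, h⟩
      · exact ⟨hl, .inl hx, h⟩

lemma encard_nonincreasingLists (m k : ℕ) :
    (nonincreasingLists m k).encard = ((m + k).choose k : ℕ) := by
  induction m generalizing k with
  | zero => simp [nonincreasingLists_zero_left]
  | succ m ihm =>
    induction k with
    | zero => simp [nonincreasingLists_succ_zero, List.cons_injective.encard_image, ihm]
    | succ k ihk =>
      have hdisj : Disjoint (List.cons (k + 1) '' nonincreasingLists m (k + 1))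
          (nonincreasingLists (m + 1) k) := by
        refine Set.disjoint_left.mpr ?_
        rintro _ ⟨l, _, rfl⟩ ⟨_, h⟩
        exact absurd (List.isChain_cons_cons.mp h).1 (by simp)
      rw [nonincreasingLists_succ_succ, Set.encard_union_eq hdisj,
        List.cons_injective.encard_image, ihm, ihk, ← Nat.cast_add]
      congr 1
      rw [show m + 1 + (k + 1) = m + k + 1 + 1 by ring, Nat.choose_succ_succ (m + k + 1) k,
        ← add_assoc, add_right_comm m 1 k, add_comm]

lemma finite_nonincreasingLists (m k : ℕ) : (nonincreasingLists m k).Finite :=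
  Set.finite_of_encard_eq_coe (encard_nonincreasingLists m k)

lemma ncard_nonincreasingLists {n k : ℕ} (hk : k ≤ n) :
    (nonincreasingLists (n - k) k).ncard = n.choose k := by
  rw [Set.ncard_def, encard_nonincreasingLists, ENat.toNat_natCast, Nat.sub_add_cancel hk]

/-- The class obtained from `P` by appending increasing sequences on the right: the entries of the
codes of such sequences are nonincreasing. -/
def appendIncreasing (P : Set (List ℕ)) : Set (List ℕ) :=
  {l | ∃ a ∈ P, ∃ b, (a.length :: b).IsChain (· ≥ ·) ∧ l = a ++ b}

lemma isLehmerFrom_of_isChain {l : List ℕ} :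
    ∀ {k : ℕ}, (k :: l).IsChain (· ≥ ·) → IsLehmerFrom k l := by
  induction l with
  | nil => intros; trivial
  | cons c l ih =>
    intro k h
    obtain ⟨hc, hl⟩ := List.isChain_cons_cons.mp h
    exact ⟨hc, (ih hl).mono (by omega)⟩

lemma exists_afterDelete_append (a b : List ℕ) : ∀ t, ∃ t' ≤ t + a.length,
    afterDelete t (a ++ b) = afterDelete t a ++ afterDelete t' b := by
  induction a with
  | nil => exact fun t => ⟨t, le_rfl, rfl⟩
  | cons c a ih =>
    intro t
    simp only [List.cons_append, afterDelete, List.length_cons]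
    split_ifs
    · obtain ⟨t', ht', h⟩ := ih t
      exact ⟨t', by omega, by rw [h, List.cons_append]⟩
    · obtain ⟨t', ht', h⟩ := ih (t + 1)
      exact ⟨t', by omega, by rw [h, List.cons_append]⟩

lemma isChain_cons_afterDelete {l : List ℕ} : ∀ {k t : ℕ}, t ≤ k →
    ((k + 1) :: l).IsChain (· ≥ ·) → (k :: afterDelete t l).IsChain (· ≥ ·) := by
  induction l with
  | nil => exact fun _ _ => .singleton _
  | cons c l ih =>
    intro k t ht h
    obtain ⟨hc, hl⟩ := List.isChain_cons_cons.mp h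
    rw [afterDelete]
    split_ifs with htc
    · refine .cons_cons (by omega) (ih (by omega) ?_)
      rwa [Nat.sub_add_cancel (by omega)]
    · rw [(isLehmerFrom_of_isChain hl).afterDelete_eq (by omega)]
      exact .cons_cons (by omega) hl

lemma isChain_cons_of_deletion {k : ℕ} {u v : List ℕ} (h : (k :: u).IsChain (· ≥ ·))
    (hv : Deletion u v) : (k :: v).IsChain (· ≥ ·) := by
  obtain ⟨a, c, b, rfl, rfl⟩ := hv
  have hcb : (c :: b).IsChain (· ≥ ·) := h.suffix ⟨k :: a, rfl⟩
  rw [(isLehmerFrom_of_isChain hcb).afterDelete_eq le_rfl]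
  exact h.sublist (((List.sublist_cons_self c b).append_left a).cons_cons k)

lemma isCodeClass_appendIncreasing {P : Set (List ℕ)} (hP : IsCodeClass P) :
    IsCodeClass (appendIncreasing P) := by
  constructor
  · rintro _ ⟨a, ha, b, hb, rfl⟩
    exact (isLehmerFrom_append a b 0).mpr
      ⟨hP.isLehmer a ha, by simpa using isLehmerFrom_of_isChain hb⟩
  · rintro _ ⟨u, hu, l, hl, rfl⟩ v hv
    rcases hv.append_cases with ⟨a, c, b, rfl, rfl⟩ | ⟨l', hl', rfl⟩
    · have hc : c ≤ a.length := by
        have := ((isLehmerFrom_append a (c :: b) 0).mp (hP.isLehmer _ hu)).2.1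
        omega
      obtain ⟨t, ht, hsplit⟩ := exists_afterDelete_append b l c
      refine ⟨a ++ afterDelete c b, hP.deletion_mem _ hu _ ⟨a, c, b, rfl, rfl⟩,
        afterDelete t l, ?_, by rw [hsplit, List.append_assoc]⟩
      rw [List.length_append, length_afterDelete]
      exact isChain_cons_afterDelete (by omega)
        (by simpa [add_assoc] using hl)
    · exact ⟨u, hu, l', isChain_cons_of_deletion hl hl', rfl⟩

lemma ncard_level_mul_choose_le {P : Set (List ℕ)} (hP : IsCodeClass P) {n k : ℕ} (hk : k ≤ n) :
    (level P k).ncard * n.choose k ≤ (level (appendIncreasing P) n).ncard := by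
  rw [← ncard_nonincreasingLists hk, ← Set.ncard_prod]
  refine Set.ncard_le_ncard_of_injOn (fun p : List ℕ × List ℕ => p.1 ++ p.2) ?_ ?_
    (finite_level (isCodeClass_appendIncreasing hP).isLehmer n)
  · rintro ⟨a, b⟩ ⟨⟨ha, hak⟩, hbn, hb⟩
    dsimp only at ha hak hbn hb
    exact ⟨⟨a, ha, b, by rwa [hak], rfl⟩, by simp only [List.length_append]; omega⟩
  · rintro ⟨a, b⟩ ⟨ha, -⟩ ⟨a', b'⟩ ⟨ha', -⟩ h
    exact Prod.ext_iff.mpr (List.append_inj h (ha.2.trans ha'.2.symm))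

lemma ncard_level_appendIncreasing_le {P : Set (List ℕ)} (hP : IsCodeClass P) (n : ℕ) :
    (level (appendIncreasing P) n).ncard ≤
      ∑ k ∈ Finset.range (n + 1), (level P k).ncard * n.choose k := by
  let join (k : ℕ) : Set (List ℕ) :=
    (fun p : List ℕ × List ℕ => p.1 ++ p.2) '' (level P k ×ˢ nonincreasingLists (n - k) k)
  have hfin (k : ℕ) : (level P k ×ˢ nonincreasingLists (n - k) k).Finite :=
    (finite_level hP.isLehmer k).prod (finite_nonincreasingLists _ _)
  have hsub : level (appendIncreasing P) n ⊆ ⋃ k ∈ Finset.range (n + 1), join k := by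
    rintro _ ⟨⟨a, ha, b, hb, rfl⟩, hn⟩
    rw [List.length_append] at hn
    simp only [Set.mem_iUnion]
    exact ⟨a.length, Finset.mem_range.mpr (by omega), (a, b), ⟨⟨ha, rfl⟩, by simp; omega, hb⟩, rfl⟩
  calc (level (appendIncreasing P) n).ncard
      ≤ (⋃ k ∈ Finset.range (n + 1), join k).ncard :=
        Set.ncard_le_ncard hsub (Set.Finite.biUnion (Finset.finite_toSet _)
          fun k _ => (hfin k).image _)
    _ ≤ ∑ k ∈ Finset.range (n + 1), (join k).ncard := Finset.set_ncard_biUnion_le _ _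
    _ ≤ ∑ k ∈ Finset.range (n + 1), (level P k).ncard * n.choose k := by
        refine Finset.sum_le_sum fun k hk => (Set.ncard_image_le (hfin k)).trans_eq ?_
        rw [Set.ncard_prod, ncard_nonincreasingLists (Nat.lt_succ_iff.mp (Finset.mem_range.mp hk))]

lemma IsCodeRate.add_one {γ : ℝ} (h : IsCodeRate γ) (hγ : 0 < γ) : IsCodeRate (γ + 1) := by
  obtain ⟨P, hP, hrate⟩ := h
  refine ⟨appendIncreasing P, isCodeClass_appendIncreasing hP,
    hrate.add_one_of_binomial hγ (fun n k hk => ?_) fun n => ?_⟩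
  · exact_mod_cast ncard_level_mul_choose_le hP hk
  · exact_mod_cast ncard_level_appendIncreasing_le hP n

/-! ### Codes of words -/

/-- The code of a word after its initial `0`: the letter `b` contributes `b` zeros and then `b + 1`.
-/
def wordTail : List ℕ → List ℕ
  | [] => []
  | b :: w => List.replicate b 0 ++ [b + 1] ++ wordTail w

/-- Words over `ℕ` parametrise a family of indecomposable codes: appending the letter `b` to a word
puts `b` new maxima into the permutation, followed by a point just below the old maximum. -/
def wordCode (w : List ℕ) : List ℕ := 0 :: wordTail w

/-- The codes of the words satisfying `Q`. -/
def wordCodes (Q : List ℕ → Prop) : Set (List ℕ) := wordCode '' {w | Q w}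

lemma length_wordCode_nil : (wordCode []).length = 1 := rfl

lemma length_wordCode_cons (b : ℕ) (w : List ℕ) :
    (wordCode (b :: w)).length = b + 1 + (wordCode w).length := by
  simp only [wordCode, wordTail, List.length_cons, List.length_append, List.length_replicate,
    List.length_nil]
  omega

lemma wordTail_injective : Function.Injective wordTail := by
  intro w
  induction w with
  | nil => rintro (_ | ⟨b, w⟩) h <;> simp_all [wordTail]
  | cons b w ih =>
    rintro (_ | ⟨b', w'⟩) h
    · simp [wordTail] at h
    · have hb : b = b' := by
        simpa [wordTail, List.takeWhile_append_of_pos] using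
          congrArg (fun l : List ℕ => (l.takeWhile (· = 0)).length) h
      subst hb
      rw [ih (List.append_cancel_left h)]

lemma wordCode_injective : Function.Injective wordCode :=
  fun _ _ h => wordTail_injective (List.cons.inj h).2

lemma replicate_append_singleton_eq {b d c : ℕ} {a s : List ℕ}
    (h : List.replicate b 0 ++ [d] = a ++ c :: s) :
    (a = List.replicate b 0 ∧ c = d ∧ s = []) ∨
      ∃ i z, i + z + 1 = b ∧ a = List.replicate i 0 ∧ c = 0 ∧ s = List.replicate z 0 ++ [d] := by
  rcases s.eq_nil_or_concat' with rfl | ⟨s, x, rfl⟩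
  · obtain ⟨ha, hd⟩ := List.append_inj' h rfl
    exact .inl ⟨ha.symm, (List.singleton_inj.mp hd).symm, rfl⟩
  · rw [← List.cons_append, ← List.append_assoc] at h
    obtain ⟨hb, hx⟩ := List.append_inj' h rfl
    obtain ⟨hlen, ha, hs⟩ := List.append_eq_replicate_iff.mp hb.symm
    rw [List.length_cons, List.replicate_succ] at hs
    obtain ⟨rfl, hs'⟩ := List.cons.inj hs
    exact .inr ⟨a.length, s.length, hlen, ha, rfl, by rw [hx, ← hs']⟩

lemma isLehmerFrom_replicate_append (k z : ℕ) (l : List ℕ) :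
    IsLehmerFrom k (List.replicate z 0 ++ l) ↔ IsLehmerFrom (k + z) l := by
  have hz : IsLehmerFrom k (List.replicate z 0) := (isLehmerFrom_iff_getElem _ k).mpr (by simp)
  rw [isLehmerFrom_append, List.length_replicate]
  exact and_iff_right hz

lemma afterDelete_replicate_append (z : ℕ) (l : List ℕ) :
    ∀ t, afterDelete t (List.replicate z 0 ++ l) = List.replicate z 0 ++ afterDelete (t + z) l := by
  induction z with
  | zero => simp
  | succ z ih =>
    intro t
    simp only [List.replicate_succ, List.cons_append, afterDelete, ih, Nat.not_lt_zero, if_false,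
      add_assoc, add_comm 1]

lemma isLehmerFrom_wordTail (w : List ℕ) : IsLehmerFrom 1 (wordTail w) := by
  induction w with
  | nil => trivial
  | cons b w ih =>
    rw [wordTail, List.append_assoc, isLehmerFrom_replicate_append]
    exact ⟨by omega, ih.mono (by omega)⟩

lemma not_isLehmer_of_wordTail_eq_append {w : List ℕ} :
    ∀ {a s : List ℕ}, wordTail w = a ++ s → s ≠ [] → ¬IsLehmer s := by
  induction w with
  | nil => exact fun h hs => absurd (List.append_eq_nil_iff.mp h.symm).2 hs
  | cons b w ih =>
    intro a s h hs
    rw [wordTail] at h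
    rcases List.append_eq_append_iff.mp h with ⟨a', rfl, hw⟩ | ⟨p, hp, rfl⟩
    · exact ih hw hs
    · rcases p with _ | ⟨c, p⟩
      · exact ih (a := []) rfl hs
      · intro hlehmer
        have hcp := hlehmer.of_append
        rcases replicate_append_singleton_eq hp with ⟨-, rfl, rfl⟩ | ⟨i, z, hb, -, rfl, rfl⟩
        · exact absurd hcp.1 (by omega)
        · have := ((isLehmerFrom_replicate_append 1 z [b + 1]).mp hcp.2).1
          omega

lemma isIndecomposable_wordCode (w : List ℕ) : IsIndecomposable (wordCode w) := by
  refine ⟨List.cons_ne_nil _ _, ⟨le_rfl, isLehmerFrom_wordTail w⟩, ?_⟩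
  rintro (_ | ⟨c, a⟩) s h ha hs
  · exact absurd rfl ha
  · exact not_isLehmer_of_wordTail_eq_append (List.cons.inj h).2 hs

lemma afterDelete_wordTail (w : List ℕ) {t : ℕ} (ht : 1 ≤ t) :
    afterDelete t (wordTail w) = wordTail w :=
  (isLehmerFrom_wordTail w).afterDelete_eq ht

/-- Deleting a point from the code of the word `w` leaves a sum of codes of words. This predicate
says that the words that can occur as the first summand satisfy `Q`, if the deleted point is not the
first one. -/
def AllHeadResidues : (List ℕ → Prop) → List ℕ → Prop
  | _, [] => True
  | Q, b :: w => Q [] ∧ (b = 0 → Q w) ∧ (1 ≤ b → Q [b - 1]) ∧ (2 ≤ b → Q ((b - 1) :: w)) ∧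
      AllHeadResidues (fun w' => Q (b :: w')) w

/-- The counterpart of `AllHeadResidues` for the words other than `[]` that can occur as the later
summands, or as any summand if the deleted point is the first one. -/
def AllTailResidues : (List ℕ → Prop) → List ℕ → Prop
  | _, [] => True
  | Q, b :: w => Q w ∧ (1 ≤ b → Q ((b - 1) :: w)) ∧ AllTailResidues Q w

/-- Every deletion from the code of `w` leaves a sum of codes of words satisfying `Q`. -/
def AllResidues (Q : List ℕ → Prop) (w : List ℕ) : Prop :=
  AllHeadResidues Q w ∧ AllTailResidues Q w

section Residues

variable {Q : List ℕ → Prop}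

lemma wordCode_mem_sumClosure {w : List ℕ} (hw : Q w) : wordCode w ∈ sumClosure (wordCodes Q) :=
  subset_sumClosure _ ⟨w, hw, rfl⟩

lemma replicate_zero_mem_sumClosure (h0 : Q []) (z : ℕ) :
    List.replicate z 0 ∈ sumClosure (wordCodes Q) := by
  induction z with
  | zero => exact nil_mem_sumClosure _
  | succ z ih => exact (append_mem_sumClosure (wordCode_mem_sumClosure h0) ih :)

lemma afterDelete_wordTail_mem_sumClosure (h0 : Q []) {w : List ℕ} (hw : AllTailResidues Q w) :
    afterDelete 0 (wordTail w) ∈ sumClosure (wordCodes Q) := by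
  induction w with
  | nil => exact nil_mem_sumClosure _
  | cons b w ih =>
    obtain ⟨-, hb, htail⟩ := hw
    rw [wordTail, List.append_assoc, afterDelete_replicate_append, List.singleton_append,
      afterDelete, if_pos (by omega), Nat.add_sub_cancel, zero_add]
    rcases b with _ | b
    · exact (append_mem_sumClosure (wordCode_mem_sumClosure h0) (ih htail) :)
    · rw [afterDelete_wordTail _ (by omega)]
      have := wordCode_mem_sumClosure (hb (by omega))
      simpa [wordCode, wordTail, List.replicate_succ] using this

lemma exists_wordTail_append_of_deletion (h0 : Q []) {w : List ℕ} (htail : AllTailResidues Q w) :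
    ∀ {H : List ℕ → Prop}, AllHeadResidues H w → ∀ {v}, Deletion (wordTail w) v →
      ∃ h s, H h ∧ s ∈ sumClosure (wordCodes Q) ∧ v = wordTail h ++ s := by
  induction w with
  | nil => rintro H _ v ⟨a, c, b, h, _⟩; simp [wordTail] at h
  | cons b w ih =>
    rintro H ⟨hnil, hw, hsingleton, hcons, hhead⟩ v hv
    rcases hv.append_cases with ⟨a, c, s, hb, rfl⟩ | ⟨l', hl', rfl⟩
    · rcases replicate_append_singleton_eq hb with ⟨rfl, rfl, rfl⟩ | ⟨i, z, rfl, rfl, rfl, rfl⟩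
      · rw [List.nil_append, afterDelete_wordTail _ (by omega)]
        rcases b with _ | b
        · exact ⟨w, [], hw rfl, nil_mem_sumClosure _, by simp⟩
        · refine ⟨[], List.replicate b 0 ++ wordCode w, hnil, append_mem_sumClosure
            (replicate_zero_mem_sumClosure h0 b) (wordCode_mem_sumClosure htail.1), ?_⟩
          simp [wordTail, wordCode, List.replicate_succ']
      · rw [List.append_assoc, afterDelete_replicate_append, zero_add, List.singleton_append,
          afterDelete, if_pos (by omega), ← List.append_assoc, ← List.replicate_add]
        rcases z with _ | z
        · exact ⟨[i], _, hsingleton (by omega), afterDelete_wordTail_mem_sumClosure h0 htail.2.2,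
            by simp [wordTail]⟩
        · refine ⟨(i + (z + 1)) :: w, [], hcons (by omega), nil_mem_sumClosure _, ?_⟩
          simp [wordTail, afterDelete_wordTail]
    · obtain ⟨h, s, hh, hs, rfl⟩ := ih htail.2.2 hhead hl'
      exact ⟨b :: h, s, hh, hs, by rw [wordTail, List.append_assoc _ (wordTail h)]⟩

lemma mem_sumClosure_of_deletion_wordCode (h0 : Q []) {w v : List ℕ} (hw : AllResidues Q w)
    (hv : Deletion (wordCode w) v) : v ∈ sumClosure (wordCodes Q) := by
  rcases Deletion.append_cases (u := [0]) hv with ⟨a, c, b, h, rfl⟩ | ⟨v', hv', rfl⟩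
  · obtain ⟨rfl, hcb⟩ | ⟨-, hcb⟩ := List.append_eq_singleton_iff.mp h.symm
    · obtain ⟨rfl, rfl⟩ := List.cons.inj hcb
      exact afterDelete_wordTail_mem_sumClosure h0 hw.2
    · exact absurd hcb (List.cons_ne_nil _ _)
  · obtain ⟨h, s, hh, hs, rfl⟩ := exists_wordTail_append_of_deletion h0 hw.2 hw.1 hv'
    exact (append_mem_sumClosure (wordCode_mem_sumClosure hh) hs :)

end Residues

/-- Each word of the list `l` has all its residues among the words satisfying `Q` and the words that
precede it in `l`. -/
def ClosedInOrder : (List ℕ → Prop) → List (List ℕ) → Prop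
  | _, [] => True
  | Q, w :: l => AllResidues Q w ∧ ClosedInOrder (fun w' => Q w' ∨ w' = w) l

lemma ClosedInOrder.allResidues {p s : List (List ℕ)} {w : List ℕ} :
    ∀ {Q : List ℕ → Prop}, ClosedInOrder Q (p ++ w :: s) →
      AllResidues (fun w' => Q w' ∨ w' ∈ p) w := by
  induction p with
  | nil => exact fun h => by simpa using h.1
  | cons w' p ih => exact fun h => by simpa only [List.mem_cons, or_assoc] using ih h.2

/-! ### Adding codes greedily -/

lemma exists_take_sum_le {b : List ℝ} {t r : ℝ} (hb : ∀ x ∈ b, 0 ≤ x ∧ x ≤ t) (h0 : 0 ≤ r)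
    (hr : r ≤ b.sum + t) : ∃ j, (b.take j).sum ≤ r ∧ r ≤ (b.take j).sum + t := by
  induction b generalizing r with
  | nil => exact ⟨0, by simpa using h0, by simpa using hr⟩
  | cons x b ih =>
    obtain ⟨⟨hx0, hxt⟩, hb⟩ := List.forall_mem_cons.mp hb
    rw [List.sum_cons] at hr
    rcases le_total r x with hrx | hxr
    · exact ⟨0, by simpa using h0, by simpa using hrx.trans hxt⟩
    · obtain ⟨j, hj⟩ := ih hb (sub_nonneg.mpr hxr) (by linarith)
      exact ⟨j + 1, by rw [List.take_succ_cons, List.sum_cons]; constructor <;> linarith⟩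

lemma exists_hasSum_take_sum {b : ℕ → List ℝ} {ρ : ℕ → ℝ}
    (hb : ∀ k, ∀ x ∈ b k, 0 ≤ x ∧ x ≤ ρ (k + 1)) (hρ : ∀ k, ρ k ≤ (b k).sum + ρ (k + 1))
    (hlim : Tendsto ρ atTop (nhds 0)) {r : ℝ} (hr : r ∈ Set.Icc 0 (ρ 0)) :
    ∃ j : ℕ → ℕ, HasSum (fun k => ((b k).take (j k)).sum) r := by
  have hstep (k : ℕ) (s : Set.Icc 0 (ρ k)) :
      ∃ j, s.1 - ((b k).take j).sum ∈ Set.Icc 0 (ρ (k + 1)) := by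
    obtain ⟨j, hle, hge⟩ := exists_take_sum_le (hb k) s.2.1 (s.2.2.trans (hρ k))
    exact ⟨j, by linarith, by linarith⟩
  choose j hj using hstep
  let rest (n : ℕ) : Set.Icc 0 (ρ n) := n.rec ⟨r, hr⟩ fun k s => ⟨_, hj k s⟩
  have hrest (k : ℕ) : ((b k).take (j k (rest k))).sum = (rest k).1 - (rest (k + 1)).1 := by
    simp [rest]
  refine ⟨fun k => j k (rest k), (hasSum_iff_tendsto_nat_of_nonneg (fun k => ?_) r).mpr ?_⟩
  · exact List.sum_nonneg fun x hx => (hb k x (List.mem_of_mem_take hx)).1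
  · simp only [hrest, Finset.sum_range_sub' fun k => (rest k).1]
    simpa [rest] using (tendsto_const_nhds (x := r)).sub
      (squeeze_zero (fun k => (rest k).2.1) (fun k => (rest k).2.2) hlim)

lemma weight_list (q : ENNReal) {l : List (List ℕ)} (hl : l.Nodup) :
    weight q {u | u ∈ l} = (l.map fun u => q ^ u.length).sum := by
  induction l with
  | nil => simp [weight]
  | cons a l ih =>
    obtain ⟨ha, hl⟩ := List.nodup_cons.mp hl
    have hset : {u | u ∈ a :: l} = {a} ∪ {u | u ∈ l} := by ext; simp
    rw [hset, weight_union q (Set.disjoint_singleton_left.mpr ha), weight_singleton, ih hl,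
      List.map_cons, List.sum_cons]

lemma weight_list_ofReal {y : ℝ} (hy : 0 ≤ y) {l : List (List ℕ)} (hl : l.Nodup) :
    weight (ENNReal.ofReal y) {u | u ∈ l} = ENNReal.ofReal (l.map fun u => y ^ u.length).sum := by
  rw [weight_list _ hl]
  clear hl
  induction l with
  | nil => simp
  | cons a l ih =>
    have hsum : 0 ≤ (l.map fun u => y ^ u.length).sum :=
      List.sum_nonneg (List.forall_mem_map.mpr fun _ _ => by positivity)
    rw [List.map_cons, List.map_cons, List.sum_cons, List.sum_cons,
      ENNReal.ofReal_add (by positivity) hsum, ih, ENNReal.ofReal_pow hy]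

/-- Blocks `B 0, B 1, …` of indecomposable codes that extend the set `D`. Each block is listed in an
order such that truncating every block arbitrarily and adding the rest to `D` keeps the sum closure
closed under deletions. -/
structure IsBlockExtension (D : Set (List ℕ)) (B : ℕ → List (List ℕ)) : Prop where
  zero_mem : [0] ∈ D
  isIndecomposable_base : ∀ u ∈ D, IsIndecomposable u
  isIndecomposable_block : ∀ k, ∀ u ∈ B k, IsIndecomposable u
  deletion_base : ∀ u ∈ D, ∀ v, Deletion u v → v ∈ sumClosure D
  deletion_block : ∀ k p u s, B k = p ++ u :: s →
    ∀ v, Deletion u v → v ∈ sumClosure (D ∪ {x | x ∈ p})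
  nodup : ∀ k, (B k).Nodup
  disjoint_block : Pairwise fun k k' => (B k).Disjoint (B k')
  disjoint_base : ∀ k, ∀ u ∈ B k, u ∉ D

namespace IsBlockExtension

variable {D : Set (List ℕ)} {B : ℕ → List (List ℕ)}

lemma deletion_truncation (h : IsBlockExtension D B) (j : ℕ → ℕ) :
    ∀ u ∈ D ∪ ⋃ k, {u | u ∈ (B k).take (j k)}, ∀ v, Deletion u v →
      v ∈ sumClosure (D ∪ ⋃ k, {u | u ∈ (B k).take (j k)}) := by
  rintro u (hu | hu) v hv
  · exact sumClosure_mono Set.subset_union_left (h.deletion_base u hu v hv)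
  · obtain ⟨k, hk⟩ := Set.mem_iUnion.mp hu
    obtain ⟨p, s, hps⟩ := List.append_of_mem hk
    have hB : B k = p ++ u :: (s ++ (B k).drop (j k)) := by
      conv_lhs => rw [← List.take_append_drop (j k) (B k), hps]
      simp
    refine sumClosure_mono (Set.union_subset_union_right D fun x hx => ?_)
      (h.deletion_block k p u _ hB v hv)
    exact Set.mem_iUnion_of_mem k (hps ▸ List.mem_append_left _ hx : x ∈ (B k).take (j k))

lemma weight_truncation (h : IsBlockExtension D B) {y : ℝ} (hy : 0 ≤ y) {j : ℕ → ℕ} {r : ℝ}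
    (hj : HasSum (fun k => (((B k).map fun u => y ^ u.length).take (j k)).sum) r) :
    weight (ENNReal.ofReal y) (D ∪ ⋃ k, {u | u ∈ (B k).take (j k)}) =
      weight (ENNReal.ofReal y) D + ENNReal.ofReal r := by
  have hblock (k : ℕ) : weight (ENNReal.ofReal y) {u | u ∈ (B k).take (j k)} =
      ENNReal.ofReal (((B k).map fun u => y ^ u.length).take (j k)).sum := by
    rw [weight_list_ofReal hy ((h.nodup k).sublist (List.take_sublist _ _)), List.map_take]
  have hdisj : Disjoint D (⋃ k, {u | u ∈ (B k).take (j k)}) :=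
    Set.disjoint_iUnion_right.mpr fun k => Set.disjoint_left.mpr fun u hD hu =>
      h.disjoint_base k u (List.mem_of_mem_take hu) hD
  rw [weight_union _ hdisj, weight_iUnion, tsum_congr hblock, ← ENNReal.ofReal_tsum_of_nonneg _
    hj.summable, hj.tsum_eq]
  · intro k
    rw [← List.map_take]
    exact List.sum_nonneg (List.forall_mem_map.mpr fun u _ => by positivity)
  · exact fun k k' hkk' => Set.disjoint_left.mpr fun u hu hu' =>
      h.disjoint_block hkk' (List.mem_of_mem_take hu) (List.mem_of_mem_take hu')

theorem isCodeRate (h : IsBlockExtension D B) {y : ℝ} (hy : 0 < y) {ρ : ℕ → ℝ}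
    (hb : ∀ k, ∀ u ∈ B k, y ^ u.length ≤ ρ (k + 1))
    (hρ : ∀ k, ρ k ≤ ((B k).map fun u => y ^ u.length).sum + ρ (k + 1))
    (hlim : Tendsto ρ atTop (nhds 0)) {w : ℝ} (hw : 0 ≤ w)
    (hD : weight (ENNReal.ofReal y) D = ENNReal.ofReal w) (hw1 : w ≤ 1) (hwρ : 1 ≤ w + ρ 0) :
    IsCodeRate (1 / y) := by
  obtain ⟨j, hj⟩ := exists_hasSum_take_sum (b := fun k => (B k).map fun u => y ^ u.length)
    (fun k => List.forall_mem_map.mpr fun u hu => ⟨by positivity, hb k u hu⟩) hρ hlim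
    (r := 1 - w) ⟨by linarith, by linarith⟩
  refine isCodeRate_of_weight_eq_one ?_ (.inl h.zero_mem) (h.deletion_truncation j) hy ?_
  · rintro u (hu | hu)
    · exact h.isIndecomposable_base u hu
    · obtain ⟨k, hk⟩ := Set.mem_iUnion.mp hu
      exact h.isIndecomposable_block k u (List.mem_of_mem_take hk)
  · rw [h.weight_truncation hy.le hj, hD, ← ENNReal.ofReal_add hw (by linarith),
      add_sub_cancel, ENNReal.ofReal_one]

end IsBlockExtension

/-! ### Languages and their weights -/

/-- The language consisting of `[]` and of the words `b :: w` with `w` in the `b`-th language of the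
list `L`. -/
def Branch (L : List (List ℕ → Prop)) : List ℕ → Prop
  | [] => True
  | b :: w => L.getD b (fun _ => False) w

/-- The word `1 ⋯ 1 s` with `e` letters `1` in front of `s`. -/
def ones (e : ℕ) (s : List ℕ) : List ℕ := List.replicate e 1 ++ s

/-- The language `1* S`, for a language `S` none of whose words begins with `1`. -/
def AfterOnes (S : List ℕ → Prop) : List ℕ → Prop
  | 1 :: w => AfterOnes S w
  | w => S w

section Languages

variable {L : List (List ℕ → Prop)} {S P : List ℕ → Prop} {w : List ℕ}

@[simp] lemma branch_nil : Branch L [] := trivial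

@[simp] lemma branch_cons {b : ℕ} : Branch L (b :: w) ↔ L.getD b (fun _ => False) w := Iff.rfl

lemma forall_branch : (∀ w, Branch L w → P w) ↔
    P [] ∧ ∀ p ∈ L.zipIdx, ∀ w, p.1 w → P (p.2 :: w) := by
  refine ⟨fun h => ⟨h [] trivial, fun p hp w hw => h _ ?_⟩, fun h w hw => ?_⟩
  · rwa [branch_cons, List.getD_eq_getElem?_getD, List.mem_zipIdx_iff_getElem?.mp hp]
  · rcases w with _ | ⟨b, w⟩
    · exact h.1
    · rcases lt_or_ge b L.length with hb | hb
      · rw [branch_cons, List.getD_eq_getElem L _ hb] at hw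
        exact h.2 (L[b], b) (List.mem_zipIdx_iff_getElem?.mpr (List.getElem?_eq_getElem hb)) w hw
      · rw [branch_cons, List.getD_eq_default _ _ hb] at hw
        exact hw.elim

@[simp] lemma ones_zero (s : List ℕ) : ones 0 s = s := rfl

@[simp] lemma ones_succ (e : ℕ) (s : List ℕ) : ones (e + 1) s = 1 :: ones e s := rfl

@[simp] lemma ones_inj_right {e : ℕ} {s s' : List ℕ} : ones e s = ones e s' ↔ s = s' :=
  List.append_right_inj _

lemma length_wordCode_ones (e : ℕ) (s : List ℕ) :
    (wordCode (ones e s)).length = 2 * e + (wordCode s).length := by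
  induction e with
  | zero => simp
  | succ e ih => rw [ones_succ, length_wordCode_cons, ih]; ring

lemma ones_inj {e e' : ℕ} {s s' : List ℕ} (hs : ∀ r, s ≠ 1 :: r) (hs' : ∀ r, s' ≠ 1 :: r) :
    ones e s = ones e' s' ↔ e = e' ∧ s = s' := by
  refine ⟨fun h => ?_, fun h => h.1 ▸ h.2 ▸ rfl⟩
  induction e generalizing e' with
  | zero =>
    rcases e' with _ | e'
    · exact ⟨rfl, h⟩
    · exact absurd h (hs _)
  | succ e ih =>
    rcases e' with _ | e'
    · exact absurd h.symm (hs' _)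
    · simpa using ih (List.cons.inj h).2

@[simp] lemma afterOnes_nil : AfterOnes S [] ↔ S [] := by rw [AfterOnes]; simp

@[simp] lemma afterOnes_one_cons : AfterOnes S (1 :: w) ↔ AfterOnes S w := by rw [AfterOnes]

@[simp] lemma afterOnes_ones {e : ℕ} : AfterOnes S (ones e w) ↔ AfterOnes S w := by
  induction e with
  | zero => rfl
  | succ e ih => rwa [ones_succ, afterOnes_one_cons]

lemma afterOnes_iff_of_ne (hw : ∀ r, w ≠ 1 :: r) : AfterOnes S w ↔ S w := by
  rw [AfterOnes]
  exact hw

@[simp] lemma afterOnes_cons {b : ℕ} (hb : b ≠ 1) : AfterOnes S (b :: w) ↔ S (b :: w) :=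
  afterOnes_iff_of_ne fun _ h => hb (List.cons.inj h).1

lemma forall_afterOnes (hS : ∀ w, ¬S (1 :: w)) :
    (∀ w, AfterOnes S w → P w) ↔ ∀ e w, S w → P (ones e w) := by
  have hne (w : List ℕ) (hw : S w) (r : List ℕ) : w ≠ 1 :: r := fun h => hS r (h ▸ hw)
  refine ⟨fun h e w hw => h _ (afterOnes_ones.mpr ((afterOnes_iff_of_ne (hne w hw)).mpr hw)),
    fun h w hw => ?_⟩
  suffices ∃ e s, S s ∧ ones e s = w by
    obtain ⟨e, s, hs, rfl⟩ := this
    exact h e s hs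
  clear h
  induction w with
  | nil => exact ⟨0, [], afterOnes_nil.mp hw, rfl⟩
  | cons b w ih =>
    rcases eq_or_ne b 1 with rfl | hb
    · obtain ⟨e, s, hs, rfl⟩ := ih (afterOnes_one_cons.mp hw)
      exact ⟨e + 1, s, hs, rfl⟩
    · exact ⟨0, b :: w, (afterOnes_cons hb).mp hw, rfl⟩

end Languages

section ResiduesOnes

variable {Q : List ℕ → Prop} {e : ℕ} {s : List ℕ}

lemma allHeadResidues_ones : AllHeadResidues Q (ones e s) ↔ (∀ i < e, Q (ones i [])) ∧
    (∀ i < e, Q (ones i [0])) ∧ AllHeadResidues (fun w => Q (ones e w)) s := by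
  induction e generalizing Q with
  | zero => simp
  | succ e ih =>
    simp only [ones_succ, AllHeadResidues, ih, Nat.forall_lt_succ_left, ones_zero]
    simp only [one_ne_zero, false_imp_iff, le_refl, Nat.sub_self, true_imp_iff,
      Nat.not_ofNat_le_one, true_and]
    tauto

lemma allTailResidues_ones : AllTailResidues Q (ones e s) ↔
    (∀ i < e, Q (ones i s)) ∧ (∀ i < e, Q (0 :: ones i s)) ∧ AllTailResidues Q s := by
  induction e with
  | zero => simp
  | succ e ih =>
    simp only [ones_succ, AllTailResidues, ih, Nat.forall_lt_succ_right, le_refl, Nat.sub_self,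
      true_imp_iff]
    tauto

end ResiduesOnes

/-- The codes of the words satisfying `Q` have the finite weight `x`. -/
def HasWeight (y : ℝ) (Q : List ℕ → Prop) (x : ℝ) : Prop :=
  0 ≤ x ∧ weight (ENNReal.ofReal y) (wordCodes Q) = ENNReal.ofReal x

lemma weight_wordCode_image_image (q : ENNReal) {f : List ℕ → List ℕ} (hf : Function.Injective f)
    {k : ℕ} (hk : ∀ w, (wordCode (f w)).length = k + (wordCode w).length) (X : Set (List ℕ)) :
    weight q (wordCode '' (f '' X)) = q ^ k * weight q (wordCode '' X) := by
  rw [weight, weight, ← Set.image_comp, tsum_image (fun u : List ℕ => q ^ u.length)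
    (wordCode_injective.comp hf).injOn, tsum_image (fun u : List ℕ => q ^ u.length)
    wordCode_injective.injOn]
  simp only [Function.comp_apply, hk, pow_add, ENNReal.tsum_mul_left]

lemma weight_wordCode_iUnion_image (q : ENNReal) {f : ℕ → List ℕ → List ℕ} {k : ℕ → ℕ}
    {X : ℕ → Set (List ℕ)} (hf : ∀ n, Function.Injective (f n))
    (hk : ∀ n w, (wordCode (f n w)).length = k n + (wordCode w).length)
    (hX : Pairwise (Function.onFun Disjoint fun n => f n '' X n)) :
    weight q (wordCode '' ⋃ n, f n '' X n) = ∑' n, q ^ k n * weight q (wordCode '' X n) := by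
  rw [Set.image_iUnion, weight_iUnion]
  · exact tsum_congr fun n => weight_wordCode_image_image q (hf n) (hk n) (X n)
  · exact fun m n hmn => (Set.disjoint_image_iff wordCode_injective).mpr (hX hmn)

lemma weight_wordCodes_branch (q : ENNReal) (L : List (List ℕ → Prop)) :
    weight q (wordCodes (Branch L)) =
      q + ∑ b ∈ Finset.range L.length,
        q ^ (b + 1) * weight q (wordCodes (L.getD b fun _ => False)) := by
  have hset : {w | Branch L w} = {[]} ∪ ⋃ b, List.cons b '' {w | L.getD b (fun _ => False) w} := by
    ext w
    rcases w with _ | ⟨b, w⟩ <;> simp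
  rw [wordCodes, hset, Set.image_union, Set.image_singleton, weight_union, weight_singleton,
    length_wordCode_nil, pow_one, weight_wordCode_iUnion_image q (k := fun b => b + 1),
    tsum_eq_sum (s := Finset.range L.length)]
  · rfl
  · intro b hb
    rw [List.getD_eq_default _ _ (by simpa using hb)]
    simp [weight]
  · exact fun b => List.cons_injective
  · exact length_wordCode_cons
  · intro b b' hbb'
    refine Set.disjoint_left.mpr ?_
    rintro _ ⟨w, -, rfl⟩ ⟨w', -, h⟩
    exact hbb' (List.cons.inj h).1.symm
  · rw [← Set.image_singleton, Set.disjoint_image_iff wordCode_injective]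
    simp

namespace HasWeight

variable {y : ℝ}

lemma branch (hy : 0 ≤ y) {L : List (List ℕ → Prop)} {X : List ℝ}
    (h : List.Forall₂ (HasWeight y) L X) :
    HasWeight y (Branch L) (y + ∑ b ∈ Finset.range X.length, y ^ (b + 1) * X.getD b 0) := by
  obtain ⟨hlen, h⟩ := List.forall₂_iff_get.mp h
  have hget (b : ℕ) (hb : b ∈ Finset.range X.length) :
      HasWeight y (L.getD b fun _ => False) (X.getD b 0) := by
    have hbX := Finset.mem_range.mp hb
    have hbL := hlen ▸ hbX
    rw [List.getD_eq_getElem X _ hbX, List.getD_eq_getElem L _ hbL]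
    exact h b hbL hbX
  have hnonneg (b : ℕ) (hb : b ∈ Finset.range X.length) : 0 ≤ y ^ (b + 1) * X.getD b 0 :=
    mul_nonneg (by positivity) (hget b hb).1
  refine ⟨add_nonneg hy (Finset.sum_nonneg hnonneg), ?_⟩
  rw [weight_wordCodes_branch, ENNReal.ofReal_add hy (Finset.sum_nonneg hnonneg),
    ENNReal.ofReal_sum_of_nonneg hnonneg, hlen]
  congr 1
  refine Finset.sum_congr rfl fun b hb => ?_
  rw [(hget b hb).2, ENNReal.ofReal_mul (by positivity), ENNReal.ofReal_pow hy]

lemma afterOnes (hy : 0 ≤ y) (hy1 : y < 1) {S : List ℕ → Prop} {x : ℝ} (h : HasWeight y S x)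
    (hS : ∀ w, ¬S (1 :: w)) : HasWeight y (AfterOnes S) (x / (1 - y ^ 2)) := by
  have hne (w : List ℕ) (hw : S w) (r : List ℕ) : w ≠ 1 :: r := fun h => hS r (h ▸ hw)
  have hset : {w | AfterOnes S w} = ⋃ e, ones e '' {w | S w} := by
    refine subset_antisymm ((forall_afterOnes hS).mpr fun e w hw =>
      Set.mem_iUnion_of_mem e ⟨w, hw, rfl⟩) (Set.iUnion_subset fun e => ?_)
    rintro _ ⟨w, hw, rfl⟩
    exact afterOnes_ones.mpr ((afterOnes_iff_of_ne (hne w hw)).mpr hw)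
  have hy2 : y ^ 2 < 1 := pow_lt_one₀ hy hy1 two_ne_zero
  refine ⟨div_nonneg h.1 (by linarith), ?_⟩
  rw [wordCodes, hset, weight_wordCode_iUnion_image _ (f := ones) (k := fun e => 2 * e)
    (fun e => List.append_right_injective _) length_wordCode_ones]
  · change ∑' e, _ * weight _ (wordCodes S) = _
    simp only [h.2, ENNReal.tsum_mul_right, pow_mul, ENNReal.tsum_geometric]
    rw [← ENNReal.ofReal_pow hy, ← ENNReal.ofReal_one, ← ENNReal.ofReal_sub _ (by positivity),
      ENNReal.ofReal_div_of_pos (by linarith), ENNReal.div_eq_inv_mul]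
  · intro e e' hee'
    refine Set.disjoint_left.mpr ?_
    rintro _ ⟨w, hw, rfl⟩ ⟨w', hw', h⟩
    exact hee' ((ones_inj (hne w' hw') (hne w hw)).mp h).1.symm

end HasWeight

lemma ClosedInOrder.mem_sumClosure_of_deletion {Q : List ℕ → Prop} {l : List (List ℕ)}
    (h0 : Q []) (hl : ClosedInOrder Q l) {p s : List (List ℕ)} {u v : List ℕ}
    (hps : l.map wordCode = p ++ u :: s) (hv : Deletion u v) :
    v ∈ sumClosure (wordCodes Q ∪ {x | x ∈ p}) := by
  obtain ⟨p, _, rfl, rfl, hs⟩ := List.map_eq_append_iff.mp hps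
  obtain ⟨w, s, rfl, rfl, -⟩ := List.map_eq_cons_iff.mp hs
  refine sumClosure_mono ?_ (mem_sumClosure_of_deletion_wordCode (.inl h0) hl.allResidues hv)
  rintro _ ⟨w', hw' | hw', rfl⟩
  · exact .inl ⟨w', hw', rfl⟩
  · exact .inr (List.mem_map_of_mem hw')

/-! ### Growth rates from 2.353 to 2.374 -/

/-- The words `1 ⋯ 1` and `1 ⋯ 1 0`. -/
abbrev tailWords (w : List ℕ) : Prop := AfterOnes (Branch [Branch []]) w

/-- The words of `1* {ε, 0, 2 t}`, where `t` runs through `tailWords`. -/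
abbrev wideWords (w : List ℕ) : Prop :=
  AfterOnes (Branch [Branch [], fun _ => False, tailWords]) w

/-- The words of `1* {ε, 0, 2}`. -/
abbrev narrowWords (w : List ℕ) : Prop :=
  AfterOnes (Branch [Branch [], fun _ => False, Branch []]) w

/-- The base words for the growth rates from 2.353 to 2.374. -/
def wideBase (w : List ℕ) : Prop := Branch [wideWords, wideWords, narrowWords, tailWords] w

/-- The blocks of words that extend `wideBase`. -/
def wideBlock : ℕ → List (List ℕ)
  | 0 => [[0, 3], [4], [1, 3], [0, 3, 0], [0, 4], [4, 0], [5]]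
  | e + 1 => [0 :: 2 :: ones e [2], 2 :: ones e [2, 0], 3 :: ones e [2], 1 :: 2 :: ones e [2],
      0 :: 2 :: ones e [2, 0], 2 :: ones e [2, 1], 3 :: ones e [2, 0]]

section Wide

variable {w : List ℕ}

@[simp] lemma wideBase_nil : wideBase [] := trivial

@[simp] lemma wideBase_zero_cons : wideBase (0 :: w) ↔ wideWords w := Iff.rfl

@[simp] lemma wideBase_one_cons : wideBase (1 :: w) ↔ wideWords w := Iff.rfl

@[simp] lemma wideBase_two_cons : wideBase (2 :: w) ↔ narrowWords w := Iff.rfl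

@[simp] lemma wideBase_three_cons : wideBase (3 :: w) ↔ tailWords w := Iff.rfl

lemma wideBase_ones {e : ℕ} (h : wideBase w) (hw : wideWords w) : wideBase (ones e w) := by
  rcases e with _ | e
  · exact h
  · simpa [wideWords] using hw

lemma forall_wideBase {P : List ℕ → Prop} : (∀ w, wideBase w → P w) ↔ P [] ∧
    (∀ b ∈ [0, 1], ∀ e, P (b :: ones e []) ∧ P (b :: ones e [0]) ∧
      ∀ i, P (b :: ones e (2 :: ones i [])) ∧ P (b :: ones e (2 :: ones i [0]))) ∧
    (∀ e, P (2 :: ones e []) ∧ P (2 :: ones e [0]) ∧ P (2 :: ones e [2])) ∧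
    ∀ e, P (3 :: ones e []) ∧ P (3 :: ones e [0]) := by
  simp [wideBase, wideWords, narrowWords, tailWords, forall_branch, forall_afterOnes,
    and_assoc]

lemma allResidues_wideBase : ∀ w, wideBase w → AllResidues wideBase w := by
  simp [forall_wideBase, AllResidues, AllHeadResidues, AllTailResidues,
    allHeadResidues_ones, allTailResidues_ones, wideBase_ones, wideWords, narrowWords, tailWords]

lemma closedInOrder_wideBlock (k : ℕ) : ClosedInOrder wideBase (wideBlock k) := by
  rcases k with _ | e <;>
  simp [wideBlock, ClosedInOrder, AllResidues, AllHeadResidues, AllTailResidues,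
    allHeadResidues_ones, allTailResidues_ones, wideBase_ones, wideWords, narrowWords, tailWords]

lemma length_div_two_of_mem_wideBlock {k : ℕ} (hw : w ∈ wideBlock k) :
    (wordCode w).length / 2 = k + 3 := by
  rcases k with _ | e
  · revert w
    decide
  · simp only [wideBlock, List.mem_cons, List.not_mem_nil, or_false] at hw
    rcases hw with rfl | rfl | rfl | rfl | rfl | rfl | rfl <;>
    simp only [length_wordCode_cons, length_wordCode_ones, length_wordCode_nil] <;> omega

lemma nodup_wideBlock (k : ℕ) : (wideBlock k).Nodup := by
  rcases k with _ | e <;> simp [wideBlock]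

lemma not_wideBase_of_mem_wideBlock {k : ℕ} (hw : w ∈ wideBlock k) : ¬wideBase w := by
  revert w
  rcases k with _ | e <;>
  simp [wideBlock, wideBase, wideWords, narrowWords, tailWords]

lemma isBlockExtension_wideBlock :
    IsBlockExtension (wordCodes wideBase) fun k => (wideBlock k).map wordCode where
  zero_mem := ⟨[], wideBase_nil, rfl⟩
  isIndecomposable_base := by
    rintro _ ⟨w, -, rfl⟩
    exact isIndecomposable_wordCode w
  isIndecomposable_block k := List.forall_mem_map.mpr fun w _ => isIndecomposable_wordCode w
  deletion_base := by
    rintro _ ⟨w, hw, rfl⟩ v hv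
    exact mem_sumClosure_of_deletion_wordCode wideBase_nil (allResidues_wideBase w hw) hv
  deletion_block k _ _ _ hps _ hv :=
    (closedInOrder_wideBlock k).mem_sumClosure_of_deletion wideBase_nil hps hv
  nodup k := (nodup_wideBlock k).map wordCode_injective
  disjoint_block k k' hkk' := by
    refine (List.disjoint_map wordCode_injective fun w hw hw' => hkk' ?_ :)
    have := length_div_two_of_mem_wideBlock hw
    have := length_div_two_of_mem_wideBlock hw'
    omega
  disjoint_base k := List.forall_mem_map.mpr fun w hw => by
    rw [wordCodes, wordCode_injective.mem_set_image]
    exact not_wideBase_of_mem_wideBlock hw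

end Wide

section WideRate

variable {y : ℝ}

lemma hasWeight_false : HasWeight y (fun _ => False) 0 := ⟨le_rfl, by simp [wordCodes, weight]⟩

lemma hasWeight_branch_nil (hy : 0 ≤ y) : HasWeight y (Branch []) y := by
  simpa using HasWeight.branch hy List.Forall₂.nil

lemma hasWeight_tailWords (hy : 0 < y) (hy1 : y < 1) : HasWeight y tailWords (y / (1 - y)) := by
  convert (HasWeight.branch hy.le (.cons (hasWeight_branch_nil hy.le) .nil)).afterOnes hy.le hy1
    (by simp) using 1
  have : 1 - y ≠ 0 := by linarith
  have : 1 - y ^ 2 ≠ 0 := by nlinarith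
  simp
  field_simp
  ring

/-- The total weight of the codes of the words in `wideBase`. -/
def wideWeight (y : ℝ) : ℝ :=
  y + (y + y ^ 2) * (y / (1 - y) + y ^ 4 / ((1 - y) * (1 - y ^ 2))) +
    y ^ 3 * (y / (1 - y) + y ^ 4 / (1 - y ^ 2)) + y ^ 5 / (1 - y)

lemma hasWeight_wideBase (hy : 0 < y) (hy1 : y < 1) : HasWeight y wideBase (wideWeight y) := by
  have tail := hasWeight_tailWords hy hy1
  have nil := hasWeight_branch_nil hy.le
  have wide : HasWeight y wideWords _ := (HasWeight.branch hy.le (.cons nil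
    (.cons hasWeight_false (.cons tail .nil)))).afterOnes hy.le hy1 (by simp)
  have narrow : HasWeight y narrowWords _ := (HasWeight.branch hy.le (.cons nil
    (.cons hasWeight_false (.cons nil .nil)))).afterOnes hy.le hy1 (by simp)
  have base : HasWeight y wideBase _ :=
    HasWeight.branch hy.le (.cons wide (.cons wide (.cons narrow (.cons tail .nil))))
  convert base using 1
  have : 1 - y ≠ 0 := by linarith
  have : 1 - y ^ 2 ≠ 0 := by nlinarith
  simp [wideWeight, Finset.sum_range_succ]
  field_simp
  ring

lemma wideWeight_mono {z : ℝ} (hy : 0 < y) (hyz : y ≤ z) (hz : z < 1) :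
    wideWeight y ≤ wideWeight z := by
  have : 0 < z := hy.trans_le hyz
  have : 0 < 1 - y := by linarith
  have : 0 < 1 - z := by linarith
  have : 0 < 1 - y ^ 2 := by nlinarith
  have : 0 < 1 - z ^ 2 := by nlinarith
  unfold wideWeight
  gcongr

/-- The total weight of the codes of the words in the blocks `wideBlock (k + 1)` with `e ≤ k`. -/
def wideRemainder (y : ℝ) (e : ℕ) : ℝ := (3 * y ^ 8 + 4 * y ^ 9) * (y ^ 2) ^ e / (1 - y ^ 2)

lemma sum_wideBlock_zero : ((wideBlock 0).map fun w => y ^ (wordCode w).length).sum =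
    2 * y ^ 6 + 5 * y ^ 7 := by
  simp only [wideBlock, List.map_cons, List.map_nil, List.sum_cons, List.sum_nil,
    length_wordCode_cons, length_wordCode_nil]
  ring

lemma sum_wideBlock_succ (hy : y ^ 2 ≠ 1) (e : ℕ) :
    ((wideBlock (e + 1)).map fun w => y ^ (wordCode w).length).sum =
      wideRemainder y e - wideRemainder y (e + 1) := by
  have : 1 - y ^ 2 ≠ 0 := sub_ne_zero.mpr hy.symm
  simp only [wideBlock, List.map_cons, List.map_nil, List.sum_cons, List.sum_nil,
    length_wordCode_cons, length_wordCode_ones, length_wordCode_nil, wideRemainder]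
  field_simp
  ring

lemma pow_le_wideRemainder (hy : 0.42123 ≤ y) (hy1 : y < 1) (e : ℕ) :
    y ^ (2 * (e + 3)) ≤ wideRemainder y e := by
  have hy0 : 0 < y := by linarith
  have hfactor : 1 - y ^ 2 ≤ y ^ 2 * (3 + 4 * y) := by nlinarith
  rw [wideRemainder, le_div_iff₀ (by nlinarith)]
  calc y ^ (2 * (e + 3)) * (1 - y ^ 2) ≤ y ^ (2 * (e + 3)) * (y ^ 2 * (3 + 4 * y)) := by gcongr
    _ = _ := by ring

lemma tendsto_wideRemainder (hy : 0 < y) (hy1 : y < 1) :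
    Tendsto (wideRemainder y) atTop (nhds 0) := by
  have h := tendsto_pow_atTop_nhds_zero_of_lt_one (by positivity : 0 ≤ y ^ 2)
    (pow_lt_one₀ hy.le hy1 two_ne_zero)
  have := (h.const_mul (3 * y ^ 8 + 4 * y ^ 9)).div_const (1 - y ^ 2)
  rwa [mul_zero, zero_div] at this

lemma one_le_wideWeight_add (hy : 0.42123 ≤ y) (hy1 : y < 1) :
    1 ≤ wideWeight y + (2 * y ^ 6 + 5 * y ^ 7 + wideRemainder y 0) := by
  have : 0 < 1 - y ^ 2 := by nlinarith
  calc (1 : ℝ) ≤ wideWeight 0.42123 +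
        (2 * 0.42123 ^ 6 + 5 * 0.42123 ^ 7 + wideRemainder 0.42123 0) := by
        norm_num [wideWeight, wideRemainder]
    _ ≤ _ := by
        have := wideWeight_mono (by norm_num) hy hy1
        unfold wideRemainder
        gcongr

theorem isCodeRate_of_wideBase (hy : 0.42123 ≤ y) (hy1 : y ≤ 0.42499) : IsCodeRate (1 / y) := by
  have h0 : 0 < y := by linarith
  have h1 : y < 1 := by linarith
  have hweight := hasWeight_wideBase h0 h1
  refine isBlockExtension_wideBlock.isCodeRate h0
    (ρ := fun k => Nat.casesOn k (2 * y ^ 6 + 5 * y ^ 7 + wideRemainder y 0) (wideRemainder y))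
    ?_ ?_ ?_ hweight.1 hweight.2 ?_ (one_le_wideWeight_add hy h1)
  · intro k
    refine List.forall_mem_map.mpr fun w hw => le_trans (pow_le_pow_of_le_one h0.le h1.le ?_)
      (pow_le_wideRemainder hy h1 k)
    have := length_div_two_of_mem_wideBlock hw
    omega
  · intro k
    rw [List.map_map]
    rcases k with _ | e
    · exact (congrArg (· + wideRemainder y 0) sum_wideBlock_zero).ge
    · exact (sub_eq_iff_eq_add.mp (sum_wideBlock_succ (by nlinarith) e).symm).le
  · exact (tendsto_add_atTop_iff_nat 1).mp (tendsto_wideRemainder h0 h1)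
  · calc wideWeight y ≤ wideWeight 0.42499 := wideWeight_mono h0 hy1 (by norm_num)
      _ ≤ 1 := by norm_num [wideWeight]

end WideRate

/-! ### Growth rates from 2.374 to 2.475 -/

/-- The words of `1* {ε, 0, 2, 2 0}`, together with those of `1* {0 0, 0 1}` if `up` is true. -/
abbrev flatWords (up : Bool) (w : List ℕ) : Prop :=
  AfterOnes (Branch [Branch (if up then [Branch [], Branch []] else []), fun _ => False,
    Branch [Branch []]]) w

/-- The base words for the growth rates from 2.374 to 3.5, with `up = true` from 2.41 on. -/
def cornerBase (up : Bool) (w : List ℕ) : Prop :=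
  Branch [Branch [tailWords, flatWords up, Branch [Branch []]], flatWords up, tailWords] w

/-- The word of even index `b = 2 e` is `0 0 1 ⋯ 1 s` and the word of odd index `b = 2 e + 1` is
`2 1 ⋯ 1 s`, with `e` letters `1`. -/
def corner (b : ℕ) (s : List ℕ) : List ℕ :=
  if b % 2 = 0 then 0 :: 0 :: ones (b / 2) s else 2 :: ones (b / 2) s

/-- The words `3 t`, `0 0 2 t`, `2 2 t`, `0 0 1 2 t`, `2 1 2 t`, …. -/
def lowerCorner : ℕ → List ℕ → List ℕ
  | 0, t => 3 :: t
  | b + 1, t => corner b (2 :: t)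

/-- The blocks of words that extend `cornerBase up`. -/
def cornerBlock (up : Bool) (b : ℕ) : List (List ℕ) :=
  if up then [lowerCorner b [], corner b [0, 0], lowerCorner b [0], corner b [0, 1]]
  else [lowerCorner b [], lowerCorner b [0]]

section Corner

variable {up : Bool} {w : List ℕ}

lemma corner_two_mul (e : ℕ) (s : List ℕ) : corner (2 * e) s = 0 :: 0 :: ones e s := by
  simp [corner]

lemma corner_two_mul_add_one (e : ℕ) (s : List ℕ) : corner (2 * e + 1) s = 2 :: ones e s := by
  simp [corner, Nat.mul_add_div]

lemma corner_two_mul_add_two (e : ℕ) (s : List ℕ) :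
    corner (2 * e + 1 + 1) s = 0 :: 0 :: 1 :: ones e s :=
  corner_two_mul (e + 1) s

lemma corner_inj {b b' : ℕ} {s s' : List ℕ} (hs : ∀ r, s ≠ 1 :: r) (hs' : ∀ r, s' ≠ 1 :: r) :
    corner b s = corner b' s' ↔ b = b' ∧ s = s' := by
  obtain ⟨e, rfl | rfl⟩ := Nat.even_or_odd' b <;> obtain ⟨e', rfl | rfl⟩ := Nat.even_or_odd' b' <;>
  simp only [corner_two_mul, corner_two_mul_add_one, List.cons.injEq, true_and, ones_inj hs hs'] <;>
  grind

@[simp] lemma lowerCorner_inj {b b' : ℕ} {t t' : List ℕ} :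
    lowerCorner b t = lowerCorner b' t' ↔ b = b' ∧ t = t' := by
  have three_ne (b : ℕ) (s t : List ℕ) : 3 :: t ≠ corner b s := by
    rw [corner]; split_ifs <;> simp
  rcases b with _ | b <;> rcases b' with _ | b' <;>
  simp [lowerCorner, corner_inj, three_ne, (three_ne _ _ _).symm]

lemma lowerCorner_ne_corner {b b' : ℕ} {t s : List ℕ} :
    lowerCorner b t ≠ corner b' (0 :: s) := by
  rcases b with _ | b
  · rw [lowerCorner, corner]; split_ifs <;> simp
  · simp [lowerCorner, corner_inj]

lemma length_wordCode_corner (b : ℕ) (s : List ℕ) :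
    (wordCode (corner b s)).length = b + 2 + (wordCode s).length := by
  obtain ⟨e, rfl | rfl⟩ := Nat.even_or_odd' b
  all_goals
    simp only [corner_two_mul, corner_two_mul_add_one, length_wordCode_cons, length_wordCode_ones]
    omega

lemma length_wordCode_lowerCorner (b : ℕ) (t : List ℕ) :
    (wordCode (lowerCorner b t)).length = b + 4 + (wordCode t).length := by
  rcases b with _ | b
  · simp only [lowerCorner, length_wordCode_cons]
  · simp only [lowerCorner, length_wordCode_corner, length_wordCode_cons]
    omega

lemma cornerBase_nil : cornerBase up [] := trivial

@[simp] lemma cornerBase_zero : cornerBase up [0] := trivial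

@[simp] lemma cornerBase_zero_zero_cons : cornerBase up (0 :: 0 :: w) ↔ tailWords w := Iff.rfl

@[simp] lemma cornerBase_zero_one_cons : cornerBase up (0 :: 1 :: w) ↔ flatWords up w := Iff.rfl

@[simp] lemma cornerBase_zero_two_cons :
    cornerBase up (0 :: 2 :: w) ↔ Branch [Branch []] w := Iff.rfl

@[simp] lemma cornerBase_one_cons : cornerBase up (1 :: w) ↔ flatWords up w := Iff.rfl

@[simp] lemma cornerBase_two_cons : cornerBase up (2 :: w) ↔ tailWords w := Iff.rfl

lemma cornerBase_ones {e : ℕ} (h : cornerBase up w) (hw : flatWords up w) :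
    cornerBase up (ones e w) := by
  rcases e with _ | e
  · exact h
  · simpa using hw

lemma cornerBase_zero_cons_ones {e : ℕ} (h : cornerBase up (0 :: w)) (hw : flatWords up w) :
    cornerBase up (0 :: ones e w) := by
  rcases e with _ | e
  · exact h
  · simpa using hw

lemma forall_cornerBase {P : List ℕ → Prop} : (∀ w, cornerBase up w → P w) ↔
    P [] ∧ P [0] ∧ P [0, 2] ∧ P [0, 2, 0] ∧ (∀ w, tailWords w → P (0 :: 0 :: w) ∧ P (2 :: w)) ∧
      ∀ w, flatWords up w → P (0 :: 1 :: w) ∧ P (1 :: w) := by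
  have h : (∀ w, cornerBase up w → P w) ↔ _ := forall_branch
  simp [h, forall_branch, forall_and]
  tauto

lemma allResidues_cornerBase : ∀ w, cornerBase up w → AllResidues (cornerBase up) w := by
  cases up <;>
  simp [forall_cornerBase, forall_branch, forall_afterOnes, AllResidues, AllHeadResidues,
    AllTailResidues, allHeadResidues_ones, allTailResidues_ones, cornerBase_ones,
    cornerBase_zero_cons_ones, cornerBase_nil]

lemma closedInOrder_cornerBlock (b : ℕ) : ClosedInOrder (cornerBase up) (cornerBlock up b) := by
  rcases b with _ | b
  · cases up <;>
    simp [cornerBlock, lowerCorner, corner, ClosedInOrder, AllResidues, AllHeadResidues,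
      AllTailResidues, cornerBase_nil]
  · obtain ⟨e, rfl | rfl⟩ := Nat.even_or_odd' b <;> cases up <;>
    simp [cornerBlock, lowerCorner, corner_two_mul, corner_two_mul_add_one, corner_two_mul_add_two,
      ClosedInOrder, AllResidues, AllHeadResidues, AllTailResidues, allHeadResidues_ones,
      allTailResidues_ones, cornerBase_ones, cornerBase_zero_cons_ones, cornerBase_nil]

lemma nodup_cornerBlock (b : ℕ) : (cornerBlock up b).Nodup := by
  cases up <;> simp [cornerBlock, lowerCorner_ne_corner, lowerCorner_ne_corner.symm, corner_inj]

lemma disjoint_cornerBlock {b b' : ℕ} (hb : b' ≠ b) :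
    (cornerBlock up b).Disjoint (cornerBlock up b') := by
  cases up <;>
  simp [cornerBlock, lowerCorner_ne_corner, lowerCorner_ne_corner.symm, corner_inj, hb]

lemma add_five_le_length_of_mem_cornerBlock {b : ℕ} (hw : w ∈ cornerBlock up b) :
    b + 5 ≤ (wordCode w).length := by
  revert w
  cases up <;> simp [cornerBlock, length_wordCode_lowerCorner, length_wordCode_corner,
    length_wordCode_cons, length_wordCode_nil]

lemma not_cornerBase_of_mem_cornerBlock {b : ℕ} (hw : w ∈ cornerBlock up b) :
    ¬cornerBase up w := by
  revert w
  rcases b with _ | b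
  · cases up <;> simp [cornerBlock, lowerCorner, corner, cornerBase]
  · obtain ⟨e, rfl | rfl⟩ := Nat.even_or_odd' b <;> cases up <;>
    simp [cornerBlock, lowerCorner, corner_two_mul, corner_two_mul_add_one, corner_two_mul_add_two]

end Corner

/-- The number of words in `cornerBlock up b`, halved. -/
def cornerMultiplicity (up : Bool) : ℝ := if up then 2 else 1

/-- The total weight of the codes of the words in `cornerBase up`. -/
def cornerWeight (up : Bool) (y : ℝ) : ℝ :=
  (y + y ^ 3 + 2 * y ^ 4 + cornerMultiplicity up * (y ^ 5 + y ^ 6)) / (1 - y)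

/-- The total weight of the codes of the words in the blocks `cornerBlock up c` with `b ≤ c`. -/
def cornerRemainder (up : Bool) (y : ℝ) (b : ℕ) : ℝ :=
  cornerMultiplicity up * (1 + y) * y ^ (b + 5) / (1 - y)

/-- Data completing `cornerBase up` and the blocks from `cornerBlock up b` on to a block extension:
indecomposable codes `E` to be joined to the base, and a block `L` of codes of length `b + 4`. -/
structure IsSeed (up : Bool) (b : ℕ) (E : Set (List ℕ)) (L : List (List ℕ)) : Prop where
  isIndecomposable : ∀ u ∈ E ∪ {u | u ∈ L}, IsIndecomposable u
  deletion : ∀ u ∈ E ∪ {u | u ∈ L}, ∀ v, Deletion u v →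
    v ∈ sumClosure (wordCodes (cornerBase up) ∪ E)
  length_lt : ∀ u ∈ E, u.length < b + 4
  length_eq : ∀ u ∈ L, u.length = b + 4
  nodup : L.Nodup
  notMem_wordCodes : ∀ u ∈ L, u ∉ wordCodes (cornerBase up)

/-- The block of a seed followed by the codes of the blocks `cornerBlock up c` with `b ≤ c`. -/
def seedBlock (up : Bool) (b : ℕ) (L : List (List ℕ)) : ℕ → List (List ℕ)
  | 0 => L
  | k + 1 => (cornerBlock up (b + k)).map wordCode

section Corner

variable {up : Bool} {y : ℝ} {b : ℕ} {E : Set (List ℕ)} {L : List (List ℕ)}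

lemma cornerMultiplicity_pos : 0 < cornerMultiplicity up := by
  cases up <;> simp [cornerMultiplicity]

lemma hasWeight_cornerBase (hy : 0 < y) (hy1 : y < 1) :
    HasWeight y (cornerBase up) (cornerWeight up y) := by
  have tail := hasWeight_tailWords hy hy1
  have nil := hasWeight_branch_nil hy.le
  have nil₂ := HasWeight.branch hy.le (.cons nil .nil)
  have : 1 - y ≠ 0 := by linarith
  have : 1 - y ^ 2 ≠ 0 := by nlinarith
  have head : HasWeight y (Branch (if up then [Branch [], Branch []] else []))
      (y + (cornerMultiplicity up - 1) * (y ^ 2 + y ^ 3)) := by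
    cases up
    · simpa [cornerMultiplicity] using nil
    · convert HasWeight.branch hy.le (.cons nil (.cons nil .nil)) using 1
      · simp
      · norm_num [cornerMultiplicity, Finset.sum_range_succ]
        ring
  have flat : HasWeight y (flatWords up) _ := (HasWeight.branch hy.le
    (.cons head (.cons hasWeight_false (.cons nil₂ .nil)))).afterOnes hy.le hy1 (by simp)
  have base : HasWeight y (cornerBase up) _ := HasWeight.branch hy.le
    (.cons (.branch hy.le (.cons tail (.cons flat (.cons nil₂ .nil))))
      (.cons flat (.cons tail .nil)))
  convert base using 1
  simp [cornerWeight, Finset.sum_range_succ]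
  field_simp
  ring

lemma cornerWeight_mono {z : ℝ} (hy : 0 < y) (hyz : y ≤ z) (hz : z < 1) :
    cornerWeight up y ≤ cornerWeight up z := by
  have : 0 < 1 - z := by linarith
  have : 0 < z := hy.trans_le hyz
  have := cornerMultiplicity_pos (up := up)
  unfold cornerWeight
  gcongr

lemma cornerRemainder_mono {z : ℝ} (hy : 0 < y) (hyz : y ≤ z) (hz : z < 1) :
    cornerRemainder up y b ≤ cornerRemainder up z b := by
  have : 0 < 1 - z := by linarith
  have : 0 < z := hy.trans_le hyz
  have := cornerMultiplicity_pos (up := up)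
  unfold cornerRemainder
  gcongr

lemma cornerRemainder_nonneg (hy : 0 < y) (hy1 : y < 1) : 0 ≤ cornerRemainder up y b := by
  have : 0 < 1 - y := by linarith
  have := cornerMultiplicity_pos (up := up)
  unfold cornerRemainder
  positivity

lemma sum_cornerBlock (hy : y ≠ 1) (b : ℕ) :
    ((cornerBlock up b).map fun w => y ^ (wordCode w).length).sum =
      cornerRemainder up y b - cornerRemainder up y (b + 1) := by
  have : 1 - y ≠ 0 := sub_ne_zero.mpr hy.symm
  cases up
  all_goals
    simp only [cornerBlock, cornerRemainder, cornerMultiplicity, Bool.false_eq_true, if_true,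
      if_false, List.map_cons, List.map_nil, List.sum_cons, List.sum_nil,
      length_wordCode_lowerCorner, length_wordCode_corner, length_wordCode_cons,
      length_wordCode_nil]
    field_simp
    ring

lemma pow_le_cornerRemainder (hy : 0 < y) (hy1 : y < 1)
    (hup : 1 - y ≤ cornerMultiplicity up * (1 + y) * y) (b : ℕ) :
    y ^ (b + 4) ≤ cornerRemainder up y b := by
  rw [cornerRemainder, le_div_iff₀ (by linarith)]
  calc y ^ (b + 4) * (1 - y) ≤ y ^ (b + 4) * (cornerMultiplicity up * (1 + y) * y) := by gcongr
    _ = _ := by ring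

lemma tendsto_cornerRemainder (hy : 0 ≤ y) (hy1 : y < 1) :
    Tendsto (cornerRemainder up y) atTop (nhds 0) := by
  have h := (tendsto_add_atTop_iff_nat 5).mpr (tendsto_pow_atTop_nhds_zero_of_lt_one hy hy1)
  have := (h.const_mul (cornerMultiplicity up * (1 + y))).div_const (1 - y)
  rwa [mul_zero, zero_div] at this

namespace IsSeed

lemma add_four_le_length_of_mem_seedBlock (h : IsSeed up b E L) {k : ℕ} {u : List ℕ}
    (hu : u ∈ seedBlock up b L k) : b + k + 4 ≤ u.length := by
  rcases k with _ | k
  · exact (h.length_eq u hu).ge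
  · obtain ⟨w, hw, rfl⟩ := List.mem_map.mp hu
    have := add_five_le_length_of_mem_cornerBlock hw
    omega

lemma disjoint_seedBlock (h : IsSeed up b E L) :
    Pairwise fun k k' => (seedBlock up b L k).Disjoint (seedBlock up b L k') := by
  have disjoint_zero (k : ℕ) : L.Disjoint (seedBlock up b L (k + 1)) := fun u hu hu' => by
    have := h.length_eq u hu
    have := h.add_four_le_length_of_mem_seedBlock hu'
    omega
  intro k k' hkk'
  rcases k with _ | k <;> rcases k' with _ | k'
  · exact absurd rfl hkk'
  · exact disjoint_zero k'
  · exact (disjoint_zero k).symm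
  · exact List.disjoint_map wordCode_injective (disjoint_cornerBlock (by omega))

lemma notMem_base (h : IsSeed up b E L) (k : ℕ) :
    ∀ u ∈ seedBlock up b L k, u ∉ wordCodes (cornerBase up) ∪ E := by
  rintro u hu (hu' | hu')
  · rcases k with _ | k
    · exact h.notMem_wordCodes u hu hu'
    · obtain ⟨w, hw, rfl⟩ := List.mem_map.mp hu
      exact not_cornerBase_of_mem_cornerBlock hw (wordCode_injective.mem_set_image.mp hu')
  · have := h.length_lt u hu'
    have := h.add_four_le_length_of_mem_seedBlock hu
    omega

lemma isBlockExtension (h : IsSeed up b E L) :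
    IsBlockExtension (wordCodes (cornerBase up) ∪ E) (seedBlock up b L) where
  zero_mem := .inl ⟨[], cornerBase_nil (up := up), rfl⟩
  isIndecomposable_base := by
    rintro u (⟨w, _, rfl⟩ | hu)
    exacts [isIndecomposable_wordCode w, h.isIndecomposable u (.inl hu)]
  isIndecomposable_block := by
    rintro (_ | k) u hu
    · exact h.isIndecomposable u (.inr hu)
    · obtain ⟨w, _, rfl⟩ := List.mem_map.mp hu
      exact isIndecomposable_wordCode w
  deletion_base := by
    rintro u (⟨w, hw, rfl⟩ | hu) v hv
    · exact sumClosure_mono Set.subset_union_left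
        (mem_sumClosure_of_deletion_wordCode cornerBase_nil (allResidues_cornerBase w hw) hv)
    · exact h.deletion u (.inl hu) v hv
  deletion_block := by
    rintro (_ | k) p u s hps v hv
    · exact sumClosure_mono Set.subset_union_left
        (h.deletion u (.inr (List.mem_iff_append.mpr ⟨p, s, hps⟩)) v hv)
    · exact sumClosure_mono (Set.union_subset_union_left _ Set.subset_union_left)
        ((closedInOrder_cornerBlock (b + k)).mem_sumClosure_of_deletion cornerBase_nil hps hv)
  nodup := by
    rintro (_ | k)
    exacts [h.nodup, (nodup_cornerBlock (b + k)).map wordCode_injective]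
  disjoint_block := h.disjoint_seedBlock
  disjoint_base := h.notMem_base

lemma weight_union_block (h : IsSeed up b E L) (hy : 0 ≤ y) :
    weight (ENNReal.ofReal y) (wordCodes (cornerBase up) ∪ E ∪ {u | u ∈ L}) =
      weight (ENNReal.ofReal y) (wordCodes (cornerBase up) ∪ E) +
        ENNReal.ofReal (L.map fun u => y ^ u.length).sum := by
  have hdisj : Disjoint (wordCodes (cornerBase up) ∪ E) {u | u ∈ L} :=
    Set.disjoint_right.mpr (h.notMem_base 0)
  rw [weight_union _ hdisj, weight_list_ofReal hy h.nodup]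

theorem isCodeRate (h : IsSeed up b E L) (hy : 0 < y) (hy1 : y < 1)
    (hup : 1 - y ≤ cornerMultiplicity up * (1 + y) * y)
    (hle : weight (ENNReal.ofReal y) (wordCodes (cornerBase up) ∪ E) ≤ 1)
    (hge : 1 ≤ weight (ENNReal.ofReal y) (wordCodes (cornerBase up) ∪ E ∪ {u | u ∈ L}) +
      ENNReal.ofReal (cornerRemainder up y b)) : IsCodeRate (1 / y) := by
  have hL : 0 ≤ (L.map fun u => y ^ u.length).sum :=
    List.sum_nonneg (List.forall_mem_map.mpr fun u _ => by positivity)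
  have hR : 0 ≤ cornerRemainder up y b := cornerRemainder_nonneg hy hy1
  set w := (weight (ENNReal.ofReal y) (wordCodes (cornerBase up) ∪ E)).toReal
  have hw0 : 0 ≤ w := ENNReal.toReal_nonneg
  have hw : weight (ENNReal.ofReal y) (wordCodes (cornerBase up) ∪ E) = ENNReal.ofReal w :=
    (ENNReal.ofReal_toReal (hle.trans_lt ENNReal.one_lt_top).ne).symm
  rw [h.weight_union_block hy.le, hw, add_assoc, ← ENNReal.ofReal_add hL hR,
    ← ENNReal.ofReal_add hw0 (by positivity), ENNReal.one_le_ofReal] at hge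
  refine h.isBlockExtension.isCodeRate hy (ρ := fun k => Nat.casesOn k
      ((L.map fun u => y ^ u.length).sum + cornerRemainder up y b)
      fun e => cornerRemainder up y (b + e))
    (fun k u hu => ?_) (fun k => ?_) ?_ hw0 hw (ENNReal.ofReal_le_one.mp (hw ▸ hle)) hge
  · exact (pow_le_pow_of_le_one hy.le hy1.le (h.add_four_le_length_of_mem_seedBlock hu)).trans
      (pow_le_cornerRemainder hy hy1 hup (b + k))
  · rcases k with _ | e
    · exact le_rfl
    · rw [seedBlock, List.map_map]
      exact (sub_eq_iff_eq_add.mp (sum_cornerBlock hy1.ne (b + e)).symm).le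
  · refine (tendsto_add_atTop_iff_nat 1).mp ?_
    exact (tendsto_add_atTop_iff_nat b).mpr (tendsto_cornerRemainder hy.le hy1) |>.congr
      fun e => by rw [add_comm e b]

end IsSeed

end Corner

section Seeds

variable {up : Bool} {y : ℝ}

lemma isIndecomposable_seed : IsIndecomposable [0, 0, 2, 2] := by
  refine ⟨by simp, by simp [IsLehmerFrom], fun a b h ha hb => ?_⟩
  rcases a with _ | ⟨_, _ | ⟨_, _ | ⟨_, _ | ⟨_, a⟩⟩⟩⟩ <;>
    grind [IsLehmerFrom, List.append_eq_nil_iff]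

lemma deletion_seed {v : List ℕ} (h : Deletion [0, 0, 2, 2] v) : v = [0, 1, 1] ∨ v = [0, 0, 2] := by
  obtain ⟨a, c, b, h, rfl⟩ := h
  rcases a with _ | ⟨_, _ | ⟨_, _ | ⟨_, _ | ⟨_, a⟩⟩⟩⟩ <;>
    grind [afterDelete, List.append_eq_nil_iff]

lemma wordCode_ne_seed (w : List ℕ) : wordCode w ≠ [0, 0, 2, 2] := by
  rcases w with _ | ⟨_ | _ | b, _ | ⟨_ | c, w⟩⟩ <;>
  simp [wordCode, wordTail, List.replicate_succ]

/-- `[0, 0, 2, 2]` is the code of the permutation 3412. -/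
lemma isSeed_singleton : IsSeed up 0 ∅ [[0, 0, 2, 2]] where
  isIndecomposable := by simpa using isIndecomposable_seed
  deletion := by
    have h₁ : [0, 1, 1] ∈ wordCodes (cornerBase up) := ⟨[0, 0], by simp, rfl⟩
    have h₂ : [0, 0, 2] ∈ wordCodes (cornerBase up) := ⟨[1], by simp, rfl⟩
    simp only [Set.empty_union, Set.union_empty, List.mem_singleton, Set.mem_ofPred_eq, forall_eq]
    intro v hv
    rcases deletion_seed hv with rfl | rfl
    exacts [subset_sumClosure _ h₁, subset_sumClosure _ h₂]
  length_lt := by simp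
  length_eq := by simp
  nodup := by simp
  notMem_wordCodes := by simp [wordCodes, wordCode_ne_seed]

lemma sum_seed : (([[0, 0, 2, 2]] : List (List ℕ)).map fun u => y ^ u.length).sum = y ^ 4 := by
  simp

theorem isCodeRate_of_cornerWeight (hy : 0 < y) (hy1 : y < 1)
    (hup : 1 - y ≤ cornerMultiplicity up * (1 + y) * y) (hle : cornerWeight up y ≤ 1)
    (hge : 1 ≤ cornerWeight up y + y ^ 4 + cornerRemainder up y 0) : IsCodeRate (1 / y) := by
  obtain ⟨hw0, hw⟩ := hasWeight_cornerBase (up := up) hy hy1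
  refine isSeed_singleton.isCodeRate hy hy1 hup ?_ ?_
  · rwa [Set.union_empty, hw, ENNReal.ofReal_le_one]
  · rwa [isSeed_singleton.weight_union_block hy.le, Set.union_empty, hw, sum_seed,
      ← ENNReal.ofReal_add hw0 (by positivity),
      ← ENNReal.ofReal_add (by positivity) (cornerRemainder_nonneg hy hy1),
      ENNReal.one_le_ofReal]

theorem isCodeRate_of_cornerBase_false (hy : 0.41493 ≤ y) (hy1 : y ≤ 0.42124) :
    IsCodeRate (1 / y) := by
  have h0 : 0 < y := by linarith
  have h1 : y < 1 := by linarith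
  refine isCodeRate_of_cornerWeight (up := false) h0 h1 ?_ ?_ ?_
  · norm_num [cornerMultiplicity]
    nlinarith
  · calc cornerWeight false y ≤ cornerWeight false 0.42124 := cornerWeight_mono h0 hy1 (by norm_num)
      _ ≤ 1 := by norm_num [cornerWeight, cornerMultiplicity]
  · calc (1 : ℝ) ≤ cornerWeight false 0.41493 + 0.41493 ^ 4 + cornerRemainder false 0.41493 0 := by
          norm_num [cornerWeight, cornerRemainder, cornerMultiplicity]
      _ ≤ _ := add_le_add (add_le_add (cornerWeight_mono (by norm_num) hy h1) (by gcongr))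
        (cornerRemainder_mono (by norm_num) hy h1)

theorem isCodeRate_of_cornerBase_true (hy : 0.40404 ≤ y) (hy1 : y ≤ 0.41494) :
    IsCodeRate (1 / y) := by
  have h0 : 0 < y := by linarith
  have h1 : y < 1 := by linarith
  refine isCodeRate_of_cornerWeight (up := true) h0 h1 ?_ ?_ ?_
  · norm_num [cornerMultiplicity]
    nlinarith
  · calc cornerWeight true y ≤ cornerWeight true 0.41494 := cornerWeight_mono h0 hy1 (by norm_num)
      _ ≤ 1 := by norm_num [cornerWeight, cornerMultiplicity]
  · calc (1 : ℝ) ≤ cornerWeight true 0.40404 + 0.40404 ^ 4 + cornerRemainder true 0.40404 0 := by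
          norm_num [cornerWeight, cornerRemainder, cornerMultiplicity]
      _ ≤ _ := add_le_add (add_le_add (cornerWeight_mono (by norm_num) hy h1) (by gcongr))
        (cornerRemainder_mono (by norm_num) hy h1)

end Seeds

/-! ### Growth rates from 2.475 to 3.5 -/

/-- The sum-indecomposable codes of length less than `m`. -/
def shortIndecomposables (m : ℕ) : Set (List ℕ) := {u | IsIndecomposable u ∧ u.length < m}

lemma shortIndecomposables_mono : Monotone shortIndecomposables :=
  fun _ _ hmn _ hu => ⟨hu.1, hu.2.trans_le hmn⟩

lemma mem_sumClosure_shortIndecomposables {m : ℕ} (l : List ℕ) (hl : IsLehmer l)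
    (hlm : l.length < m) : l ∈ sumClosure (shortIndecomposables m) := by
  induction hn : l.length using Nat.strong_induction_on generalizing l with
  | _ n ih =>
    by_cases h0 : l = []
    · exact h0 ▸ nil_mem_sumClosure _
    by_cases hI : IsIndecomposable l
    · exact subset_sumClosure _ ⟨hI, hlm⟩
    · unfold IsIndecomposable at hI
      push Not at hI
      obtain ⟨a, b, rfl, ha, hb, hb'⟩ := hI h0 hl
      have := List.length_pos_iff.mpr ha
      have := List.length_pos_iff.mpr hb
      rw [List.length_append] at hn hlm
      exact append_mem_sumClosure (ih a.length (by omega) a hl.of_append (by omega) rfl)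
        (ih b.length (by omega) b hb' (by omega) rfl)

lemma isIndecomposable_append_length {l : List ℕ} (hl : IsLehmer l) :
    IsIndecomposable (l ++ [l.length]) := by
  refine ⟨by simp, (isLehmerFrom_append l _ 0).mpr ⟨hl, by simp [IsLehmerFrom]⟩, ?_⟩
  intro a b h ha hb hb'
  obtain ⟨b, c, rfl⟩ := List.eq_nil_or_concat' b |>.resolve_left hb
  rw [← List.append_assoc] at h
  obtain ⟨rfl, hc⟩ := List.append_inj' h rfl
  have := ((isLehmerFrom_append b _ 0).mp hb').2.1
  have := List.length_pos_iff.mpr ha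
  simp only [List.length_append, List.cons.injEq, and_true] at hc
  omega

lemma exists_one_lt_weight_shortIndecomposables {y : ℝ} (hy : 0 < y) :
    ∃ m, 1 < weight (ENNReal.ofReal y) (shortIndecomposables m) := by
  obtain ⟨n, hn⟩ :=
    ((FloorSemiring.tendsto_pow_div_factorial_atTop (1 / y)).eventually_lt_const hy).exists
  have hfact : (0 : ℝ) < n.factorial := by exact_mod_cast n.factorial_pos
  rw [div_lt_iff₀ hfact, one_div, inv_pow, inv_lt_iff_one_lt_mul₀ (by positivity)] at hn
  refine ⟨n + 2, ?_⟩
  calc (1 : ENNReal) < ENNReal.ofReal (n.factorial * y ^ n * y) :=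
        ENNReal.one_lt_ofReal.mpr (by linarith)
    _ = weight (ENNReal.ofReal y) ((· ++ [n]) '' level {l | IsLehmer l} n) := by
        rw [weight_image_append, weight_level (P := {l | IsLehmer l}) _ (fun _ h => h),
          ncard_level_isLehmer, ENNReal.ofReal_mul (by positivity),
          ENNReal.ofReal_mul (by positivity), ENNReal.ofReal_pow hy.le, ENNReal.ofReal_natCast,
          List.length_singleton, pow_one]
    _ ≤ _ := weight_mono _ <| by
        rintro _ ⟨l, ⟨hl, rfl⟩, rfl⟩
        exact ⟨isIndecomposable_append_length hl, by simp⟩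

section ShortIndecomposables

variable {up : Bool} {y : ℝ}

lemma shortIndecomposables_four_subset :
    shortIndecomposables 4 ⊆ wordCodes (cornerBase up) ∪ {[0, 1, 2]} := by
  rintro u ⟨⟨hne, hu, hI⟩, hlen⟩
  rcases u with _ | ⟨a, _ | ⟨b, _ | ⟨c, _ | ⟨d, u⟩⟩⟩⟩
  · exact absurd rfl hne
  · obtain rfl : a = 0 := by simpa [IsLehmerFrom] using hu
    exact .inl ⟨[], cornerBase_nil (up := up), rfl⟩
  · have h₁ := hI [a] [b] rfl (by simp) (by simp)
    simp only [IsLehmer, IsLehmerFrom, and_true] at h₁ hu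
    obtain ⟨rfl, rfl⟩ : a = 0 ∧ b = 1 := by omega
    exact .inl ⟨[0], by simp, rfl⟩
  · have h₁ := hI [a] [b, c] rfl (by simp) (by simp)
    have h₂ := hI [a, b] [c] rfl (by simp) (by simp)
    simp only [IsLehmer, IsLehmerFrom, and_true] at h₁ h₂ hu
    obtain ⟨rfl, ⟨rfl, rfl⟩ | ⟨rfl, rfl⟩ | ⟨rfl, rfl⟩⟩ :
      a = 0 ∧ (b = 0 ∧ c = 2 ∨ b = 1 ∧ c = 1 ∨ b = 1 ∧ c = 2) := by omega
    · exact .inl ⟨[1], by simp, rfl⟩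
    · exact .inl ⟨[0, 0], by simp, rfl⟩
    · exact .inr rfl
  · simp only [List.length_cons] at hlen
    omega

lemma weight_shortIndecomposables_four_le_one (hy : 0 < y) (hy1 : y ≤ 0.40405) :
    weight (ENNReal.ofReal y) (wordCodes (cornerBase true) ∪ shortIndecomposables 4) ≤ 1 := by
  obtain ⟨hw0, hw⟩ := hasWeight_cornerBase (up := true) hy (by linarith)
  calc weight (ENNReal.ofReal y) (wordCodes (cornerBase true) ∪ shortIndecomposables 4)
      ≤ weight (ENNReal.ofReal y) (wordCodes (cornerBase true) ∪ {[0, 1, 2]}) :=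
        weight_mono _ (Set.union_subset Set.subset_union_left shortIndecomposables_four_subset)
    _ ≤ weight (ENNReal.ofReal y) (wordCodes (cornerBase true)) +
        weight (ENNReal.ofReal y) {[0, 1, 2]} :=
        ENNReal.tsum_union_le (fun u : List ℕ => ENNReal.ofReal y ^ u.length) _ _
    _ = ENNReal.ofReal (cornerWeight true y + y ^ 3) := by
        rw [hw, weight_singleton, ENNReal.ofReal_add hw0 (by positivity), ENNReal.ofReal_pow hy.le]
        rfl
    _ ≤ ENNReal.ofReal (cornerWeight true 0.40405 + 0.40405 ^ 3) := by
        gcongr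
        exact cornerWeight_mono hy hy1 (by norm_num)
    _ ≤ 1 := by
        rw [ENNReal.ofReal_le_one]
        norm_num [cornerWeight, cornerMultiplicity]

lemma exists_isSeed_shortIndecomposables (up : Bool) (b : ℕ) :
    ∃ L, IsSeed up b (shortIndecomposables (b + 4)) L ∧
      wordCodes (cornerBase up) ∪ shortIndecomposables (b + 5) ⊆
        wordCodes (cornerBase up) ∪ shortIndecomposables (b + 4) ∪ {u | u ∈ L} := by
  have hfin : (level {u | IsIndecomposable u ∧ u ∉ wordCodes (cornerBase up)} (b + 4)).Finite :=
    finite_level (fun u hu => hu.1.2.1) _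
  have hmem (u : List ℕ) : u ∈ hfin.toFinset.toList ↔
      (IsIndecomposable u ∧ u ∉ wordCodes (cornerBase up)) ∧ u.length = b + 4 := by
    rw [Finset.mem_toList, Set.Finite.mem_toFinset]
    rfl
  refine ⟨hfin.toFinset.toList, ⟨?_, ?_, fun u hu => hu.2, fun u hu => ((hmem u).mp hu).2,
    Finset.nodup_toList _, fun u hu => ((hmem u).mp hu).1.2⟩, ?_⟩
  · rintro u (hu | hu)
    exacts [hu.1, ((hmem u).mp hu).1.1]
  · intro u hu v hv
    obtain ⟨hI, hlen⟩ : IsIndecomposable u ∧ u.length ≤ b + 4 := by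
      rcases hu with hu | hu
      exacts [⟨hu.1, hu.2.le⟩, ⟨((hmem u).mp hu).1.1, ((hmem u).mp hu).2.le⟩]
    exact sumClosure_mono Set.subset_union_right
      (mem_sumClosure_shortIndecomposables v (hv.isLehmer hI.2.1) (hv.length_lt.trans_le hlen))
  · rintro u (hu | ⟨hI, hlen⟩)
    · exact .inl (.inl hu)
    by_cases hu : u ∈ wordCodes (cornerBase up)
    · exact .inl (.inl hu)
    rcases (Nat.lt_succ_iff.mp hlen).lt_or_eq with hlen | hlen
    exacts [.inl (.inr ⟨hI, hlen⟩), .inr ((hmem u).mpr ⟨⟨hI, hu⟩, hlen⟩)]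

theorem isCodeRate_of_shortIndecomposables (hy : 1 / 3.5 ≤ y) (hy1 : y ≤ 0.40405) :
    IsCodeRate (1 / y) := by
  have h0 : 0 < y := lt_of_lt_of_le (by norm_num) hy
  have h1 : y < 1 := by linarith
  obtain ⟨b, hle, hgt⟩ := Nat.exists_not_and_succ_of_not_zero_of_exists
    (p := fun b => 1 < weight (ENNReal.ofReal y)
      (wordCodes (cornerBase true) ∪ shortIndecomposables (b + 4)))
    (weight_shortIndecomposables_four_le_one h0 hy1).not_gt <|
    (exists_one_lt_weight_shortIndecomposables h0).imp fun m hm => hm.trans_le <| weight_mono _ <|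
      (shortIndecomposables_mono (by omega)).trans Set.subset_union_right
  obtain ⟨L, hL, hsub⟩ := exists_isSeed_shortIndecomposables true b
  refine hL.isCodeRate h0 h1 ?_ (not_lt.mp hle) ?_
  · have : 0.285 ≤ y := le_trans (by norm_num) hy
    norm_num [cornerMultiplicity]
    nlinarith
  · exact (hgt.le.trans (weight_mono _ (by simpa [add_right_comm] using hsub))).trans le_self_add

end ShortIndecomposables

lemma isCodeRate_of_le {γ : ℝ} (h1 : 2.353 ≤ γ) (h2 : γ ≤ 3.5) : IsCodeRate γ := by
  have hγ : 0 < γ := by linarith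
  have inv_le {a : ℝ} (ha : 0 < a) (h : a ≤ γ) : 1 / γ ≤ 1 / a := one_div_le_one_div_of_le ha h
  have le_inv {a : ℝ} (h : γ ≤ a) : 1 / a ≤ 1 / γ := one_div_le_one_div_of_le hγ h
  rw [← one_div_one_div γ]
  rcases le_total γ 2.37395 with h | h
  · exact isCodeRate_of_wideBase ((by norm_num : _ ≤ _).trans (le_inv h))
      ((inv_le (by norm_num) h1).trans (by norm_num))
  rcases le_total γ 2.41 with h' | h'
  · exact isCodeRate_of_cornerBase_false ((by norm_num : _ ≤ _).trans (le_inv h'))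
      ((inv_le (by norm_num) h).trans (by norm_num))
  rcases le_total γ 2.475 with h'' | h''
  · exact isCodeRate_of_cornerBase_true ((by norm_num : _ ≤ _).trans (le_inv h''))
      ((inv_le (by norm_num) h').trans (by norm_num))
  · exact isCodeRate_of_shortIndecomposables (le_inv h2)
      ((inv_le (by norm_num) h'').trans (by norm_num))

theorem isCodeRate_of_ge {γ : ℝ} (hγ : 2.353 ≤ γ) : IsCodeRate γ := by
  obtain ⟨n, hn⟩ := exists_nat_ge (γ - 3.5)
  induction n generalizing γ with
  | zero => exact isCodeRate_of_le hγ (by simpa using hn)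
  | succ n ih =>
    push_cast at hn
    rcases le_total γ 3.5 with h | h
    · exact isCodeRate_of_le hγ h
    · simpa using (ih (γ := γ - 1) (by linarith) (by linarith)).add_one (by linarith)

theorem every_rate_above_lambda_is_growth_rate_general {γ : ℝ} (hγ : 2.353 ≤ γ) :
    ∃ C : ∀ n : ℕ, Set (Equiv.Perm (Fin n)), IsPermClass C ∧
      Tendsto (fun n : ℕ => (Nat.card ↥(C n) : ℝ) ^ (1 / (n : ℝ))) atTop (nhds γ) :=
  (isCodeRate_of_ge hγ).exists_isPermClass (by linarith)

lemma exists_root_ge : ∃ x : ℝ, 2.353 ≤ x ∧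
    x ^ 8 - 2 * x ^ 7 - x ^ 5 - x ^ 4 - 2 * x ^ 3 - 2 * x ^ 2 - x - 1 = 0 := by
  let p (x : ℝ) := x ^ 8 - 2 * x ^ 7 - x ^ 5 - x ^ 4 - 2 * x ^ 3 - 2 * x ^ 2 - x - 1
  have hp : ContinuousOn p (Set.Icc 2.353 3) := by fun_prop
  obtain ⟨x, hx, hx0⟩ := intermediate_value_Icc (by norm_num) hp
    (show 0 ∈ Set.Icc (p 2.353) (p 3) from ⟨by norm_num [p], by norm_num [p]⟩)
  exact ⟨x, hx.1, hx0⟩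

/-- Let `λ_B ≈ 2.35698` be the unique positive real root of
`x⁸ - 2x⁷ - x⁵ - x⁴ - 2x³ - 2x² - x - 1`.  Every real `γ ≥ λ_B` is the growth rate of a
permutation class. -/
theorem every_rate_above_lambda_is_growth_rate (lam : ℝ) (hpos : 0 < lam)
    (hlam : ∀ x : ℝ, 0 < x →
      (x ^ 8 - 2 * x ^ 7 - x ^ 5 - x ^ 4 - 2 * x ^ 3 - 2 * x ^ 2 - x - 1 = 0 ↔ x = lam)) :
    ∀ γ : ℝ, lam ≤ γ →
      ∃ C : ∀ n : ℕ, Set (Equiv.Perm (Fin n)), IsPermClass C ∧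
        Tendsto (fun n : ℕ => (Nat.card ↥(C n) : ℝ) ^ (1 / (n : ℝ))) atTop (nhds γ) := by
  intro γ hγ
  obtain ⟨x, hx, hx0⟩ := exists_root_ge
  exact every_rate_above_lambda_is_growth_rate_general
    (hx.trans (((hlam x (by linarith)).mp hx0).le.trans hγ))
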